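/- arXiv:2405.07997 — 4 statements merged into one kernel-verified Lean document; each statement's English description precedes it below -/
import Mathlib

section
/- Let f be analytic on the unit disc D with f(0)=0, f'(0)=1, and let β < 1. If |arg((3−2β)/2 − z f''(z)/f'(z))| < arctan(2√3/(5−2β)) for all z in D, then f is starlike. -/
open Complex Metric Real

/-!
Put `q = f / (z f')`, so that `q 0 = 1`; `f` is starlike iff `Re q > 0`. Otherwise there is a point
`z₀` of least modulus with `Re q z₀ = 0`, say `q z₀ = i b`, and Jack's lemma for the Cayley
transform of `q` shows that `z₀ q'(z₀)` is real and at most `-(1 + b²) / 2`. Differentiating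
`q z f' = f` gives `z q' = 1 - q p` with `p = 1 + z f'' / f'`, so at `z₀` the number `p` is purely
imaginary with `|p| ≥ (3 + b²) / (2 |b|) ≥ √3`. But the sector that contains `p` has boundary rays
through `± i √3`, so it meets the imaginary axis only where `|p| < √3`. The sector also bounds
`Re (z f'' / f')` from above, and this prevents the derivative from having zeros in the disc.
-/

section ComplexOrder

open scoped ComplexOrder ComplexConjugate

lemma mul_deriv_nonneg_of_re_le {f : ℂ → ℂ} {f' z₀ : ℂ} (hf : HasDerivAt f f' z₀)
    (hmax : ∀ z ∈ ball 0 ‖z₀‖, (f z).re ≤ (f z₀).re) : 0 ≤ z₀ * f' := by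
  rcases eq_or_ne (z₀ * f') 0 with hc | hc
  · exact hc.ge
  rw [← re_eq_norm]
  refine le_antisymm (re_le_norm _) ?_
  -- Among the points of the circle through `z₀`, this one makes `z * f'` real and positive.
  set z := z₀ * (‖z₀ * f'‖ / (z₀ * f')) with hz
  have hzf' : z * f' = ‖z₀ * f'‖ := by
    rw [hz, mul_right_comm, mul_div_cancel₀ _ hc]
  rcases eq_or_ne z₀ z with h | hne
  · rw [h, hzf', ofReal_re, norm_real, norm_norm]
  have hnorm : ‖z‖ = ‖z₀‖ := by
    rw [hz, norm_mul, norm_div, norm_real, norm_norm, div_self (norm_ne_zero_iff.2 hc), mul_one]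
  have hseg : openSegment ℝ z₀ z ⊆ ball 0 ‖z₀‖ :=
    openSegment_subset_ball_of_ne (by simp) (by simp [hnorm]) hne
  have hloc : IsLocalMaxOn (fun z => (f z).re) (ball 0 ‖z₀‖) z₀ := IsMaxOn.localize hmax
  have hdir := hloc.hasFDerivWithinAt_nonpos
    (reCLM.hasFDerivAt.comp z₀ (hf.hasFDerivAt.restrictScalars ℝ)).hasFDerivWithinAt
    (sub_mem_posTangentConeAt_of_openSegment_subset hseg)
  have hre : ((z - z₀) * f').re ≤ 0 := by simpa using hdir
  rwa [sub_mul, hzf', sub_re, ofReal_re, sub_nonpos] at hre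

/-- **Jack's lemma**. -/
lemma one_le_mul_deriv_div_of_norm_le {w : ℂ → ℂ} {z₀ : ℂ}
    (hw : DifferentiableOn ℂ w (ball 0 ‖z₀‖)) (hwz₀ : DifferentiableAt ℂ w z₀) (hw0 : w 0 = 0)
    (hne : w z₀ ≠ 0) (hmax : ∀ z ∈ ball 0 ‖z₀‖, ‖w z‖ ≤ ‖w z₀‖) :
    1 ≤ z₀ * deriv w z₀ / w z₀ := by
  have hz₀ : z₀ ≠ 0 := by rintro rfl; exact hne hw0
  have schwarz : ∀ z ∈ ball 0 ‖z₀‖, ‖w z / z‖ ≤ ‖w z₀ / z₀‖ := by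
    intro z hz
    have hmaps : Set.MapsTo w (ball 0 ‖z₀‖) (closedBall (w 0) ‖w z₀‖) := fun x hx => by
      simpa [hw0] using hmax x hx
    have h := dist_le_div_mul_dist_of_mapsTo_ball hw hmaps hz
    rw [hw0, dist_zero_right, dist_zero_right] at h
    rw [norm_div, norm_div]
    exact div_le_of_le_mul₀ (norm_nonneg _) (by positivity) h
  have hderiv : HasDerivAt (fun z => w z / z / (w z₀ / z₀))
      ((z₀ * deriv w z₀ / w z₀ - 1) / z₀) z₀ := by
    refine ((hwz₀.hasDerivAt.div (hasDerivAt_id z₀) hz₀).div_const (w z₀ / z₀)).congr_deriv ?_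
    simp only [id]
    field_simp
  have hre : ∀ z ∈ ball 0 ‖z₀‖, (w z / z / (w z₀ / z₀)).re ≤ (w z₀ / z₀ / (w z₀ / z₀)).re := by
    intro z hz
    calc (w z / z / (w z₀ / z₀)).re ≤ ‖w z / z / (w z₀ / z₀)‖ := re_le_norm _
      _ ≤ 1 := by
        rw [norm_div]
        exact div_le_one_of_le₀ (schwarz z hz) (norm_nonneg _)
      _ = (w z₀ / z₀ / (w z₀ / z₀)).re := by rw [div_self (div_ne_zero hne hz₀), one_re]
  have h := mul_deriv_nonneg_of_re_le hderiv hre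
  rwa [mul_div_cancel₀ _ hz₀, sub_nonneg] at h

lemma norm_sub_le_norm_conj_add {a b : ℂ} (ha : 0 ≤ a.re) (hb : 0 ≤ b.re) :
    ‖a - b‖ ≤ ‖conj a + b‖ := by
  rw [← sq_le_sq₀ (norm_nonneg _) (norm_nonneg _), ← normSq_eq_norm_sq, ← normSq_eq_norm_sq,
    normSq_apply, normSq_apply]
  simp only [sub_re, sub_im, add_re, add_im, conj_re, conj_im]
  nlinarith [mul_nonneg ha hb]

/-- The **Miller–Mocanu lemma**. -/
lemma mul_deriv_le_of_re_pos_of_re_eq_zero {p : ℂ → ℂ} {z₀ : ℂ} (hz₀ : z₀ ≠ 0)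
    (hp : DifferentiableOn ℂ p (ball 0 ‖z₀‖)) (hpz₀ : DifferentiableAt ℂ p z₀)
    (hpos : ∀ z ∈ ball 0 ‖z₀‖, 0 < (p z).re) (hre : (p z₀).re = 0) :
    z₀ * deriv p z₀ ≤ -(‖p 0 - p z₀‖ ^ 2 / (2 * (p 0).re) : ℝ) := by
  set a := p 0
  have ha : 0 < a.re := hpos 0 (by simpa using hz₀)
  have hne : ∀ z, 0 ≤ (p z).re → conj a + p z ≠ 0 := fun z hz h => by
    have := congrArg re h
    simp only [add_re, conj_re, zero_re] at this
    linarith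
  have hconj : conj a + p z₀ = conj (a - p z₀) := by
    apply Complex.ext <;> simp [hre]
  have hne₀ : a - p z₀ ≠ 0 := by
    rw [← map_ne_zero (starRingEnd ℂ), ← hconj]
    exact hne z₀ hre.ge
  let w : ℂ → ℂ := fun z => (a - p z) / (conj a + p z)
  have hw : DifferentiableOn ℂ w (ball 0 ‖z₀‖) :=
    (hp.const_sub a).div (hp.const_add _) fun z hz => hne z (hpos z hz).le
  have hwz₀ : HasDerivAt w (-(2 * a.re) * deriv p z₀ / conj (a - p z₀) ^ 2) z₀ := by
    refine ((hpz₀.hasDerivAt.const_sub a).div (hpz₀.hasDerivAt.const_add (conj a))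
      (hne z₀ hre.ge)).congr_deriv ?_
    rw [← hconj, ← ofReal_ofNat, ← ofReal_mul, ← add_conj]
    ring
  have hnorm : ‖w z₀‖ = 1 := by
    rw [norm_div, hconj, norm_conj, div_self (norm_ne_zero_iff.2 hne₀)]
  have hmax : ∀ z ∈ ball 0 ‖z₀‖, ‖w z‖ ≤ ‖w z₀‖ := fun z hz => by
    rw [hnorm, norm_div]
    exact div_le_one_of_le₀ (norm_sub_le_norm_conj_add ha.le (hpos z hz).le) (norm_nonneg _)
  have hjack := one_le_mul_deriv_div_of_norm_le hw hwz₀.differentiableAt (by simp [w, a])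
    (norm_ne_zero_iff.1 (by simp [hnorm])) hmax
  have hk : (0 : ℂ) ≤ (‖a - p z₀‖ ^ 2 / (2 * a.re) : ℝ) := by
    exact_mod_cast div_nonneg (sq_nonneg _) (by linarith)
  have hcayley : z₀ * deriv p z₀ =
      -((‖a - p z₀‖ ^ 2 / (2 * a.re) : ℝ) * (z₀ * deriv w z₀ / w z₀)) := by
    have ha' : (a.re : ℂ) ≠ 0 := ofReal_ne_zero.2 ha.ne'
    have hne₀' : conj (a - p z₀) ≠ 0 := (map_ne_zero _).2 hne₀
    rw [hwz₀.deriv, show w z₀ = (a - p z₀) / conj (a - p z₀) by rw [← hconj]]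
    push_cast
    rw [← mul_conj']
    field_simp
  rw [hcayley]
  exact neg_le_neg (le_mul_of_one_le_right hk hjack)

lemma exists_eq_zero_and_forall_ball_norm_pos {E : Type*} [NormedAddCommGroup E]
    [NormedSpace ℝ E] [ProperSpace E] {u : E → ℝ} {R : ℝ} {z₁ : E}
    (hu : ContinuousOn u (ball 0 R)) (h0 : 0 < u 0) (hz₁ : z₁ ∈ ball 0 R) (huz₁ : u z₁ ≤ 0) :
    ∃ z₀ ∈ ball 0 R, u z₀ = 0 ∧ ∀ z ∈ ball 0 ‖z₀‖, 0 < u z := by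
  have hsub : closedBall (0 : E) ‖z₁‖ ⊆ ball 0 R := closedBall_subset_ball (by simpa using hz₁)
  have hK : IsCompact (closedBall 0 ‖z₁‖ ∩ u ⁻¹' Set.Iic 0) :=
    (isCompact_closedBall _ _).of_isClosed_subset
      ((hu.mono hsub).preimage_isClosed_of_isClosed isClosed_closedBall isClosed_Iic)
      Set.inter_subset_left
  obtain ⟨z₀, ⟨hz₀, huz₀⟩, hmin⟩ :=
    hK.exists_isMinOn ⟨z₁, by simp, huz₁⟩ continuous_norm.continuousOn
  have hpos : ∀ z ∈ ball 0 ‖z₀‖, 0 < u z := by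
    intro z hz
    by_contra! hneg
    rw [mem_ball_zero_iff] at hz
    rw [mem_closedBall_zero_iff] at hz₀
    exact hz.not_ge (hmin ⟨mem_closedBall_zero_iff.2 (hz.le.trans hz₀), hneg⟩)
  have hne : z₀ ≠ 0 := by rintro rfl; exact h0.not_ge huz₀
  have hcl : z₀ ∈ closure (ball 0 ‖z₀‖) := by
    rw [closure_ball 0 (norm_ne_zero_iff.2 hne), mem_closedBall_zero_iff]
  have hcont : ContinuousWithinAt u (ball 0 ‖z₀‖) z₀ :=
    (hu.continuousAt (isOpen_ball.mem_nhds (hsub hz₀))).continuousWithinAt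
  exact ⟨z₀, hsub hz₀, le_antisymm huz₀ <|
    continuousWithinAt_const.closure_le hcl hcont fun z hz => (hpos z hz).le, hpos⟩

lemma eq_zero_of_inner_deriv_le {F : Type*} [NormedAddCommGroup F] [InnerProductSpace ℝ F]
    {g g' : ℝ → F} {a b c : ℝ} (hg : ∀ t ∈ Set.Icc a b, HasDerivAt g (g' t) t)
    (hle : ∀ t ∈ Set.Icc a b, inner ℝ (g t) (g' t) ≤ c * ‖g t‖ ^ 2) (ha : g a = 0) :
    ∀ t ∈ Set.Icc a b, g t = 0 := by
  have hsq : ∀ t ∈ Set.Icc a b, HasDerivAt (‖g ·‖ ^ 2) (2 * inner ℝ (g t) (g' t)) t :=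
    fun t ht => (hg t ht).norm_sq
  intro t ht
  have h := le_gronwallBound_of_liminf_deriv_right_le (δ := 0) (K := 2 * c) (ε := 0)
    (fun s hs => (hsq s hs).continuousAt.continuousWithinAt)
    (fun s hs _ => (hsq s (Set.Ico_subset_Icc_self hs)).hasDerivWithinAt.liminf_right_slope_le)
    (by simp [ha]) (fun s hs => by
      have := hle s (Set.Ico_subset_Icc_self hs)
      linarith) t ht
  rw [gronwallBound_ε0_δ0] at h
  simpa using h

lemma inner_eq_norm_sq_mul_re_div (a b : ℂ) : inner ℝ a b = ‖a‖ ^ 2 * (b / a).re := by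
  rcases eq_or_ne a 0 with rfl | ha
  · simp
  rw [← re_ofReal_mul, Complex.inner, ofReal_pow, ← conj_mul']
  congr 1
  field_simp

lemma eqOn_zero_of_re_mul_deriv_div_le {h : ℂ → ℂ} {U : Set ℂ} {c : ℝ} {z₁ : ℂ}
    (hU : IsOpen U) (hUc : IsPreconnected U) (hh : DifferentiableOn ℂ h U)
    (hc : ∀ z ∈ U, (z * deriv h z / h z).re ≤ c) (hz₁ : z₁ ∈ U) (hne : z₁ ≠ 0)
    (hzero : h z₁ = 0) : Set.EqOn h 0 U := by
  -- Along this ray `d‖h‖² / dt = 2 ‖h‖² Re (z h' / h) ≤ 2 c ‖h‖²`, also at zeros of `h`.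
  let γ : ℝ → ℂ := fun t => z₁ * cexp t
  have hγ : ∀ t, HasDerivAt γ (γ t) t := fun t =>
    (Complex.hasDerivAt_exp (t : ℂ)).comp_ofReal.const_mul z₁
  have hγ0 : γ 0 = z₁ := by simp [γ]
  obtain ⟨b, hb, hball⟩ : ∃ b > 0, ∀ t ∈ Set.Icc 0 b, γ t ∈ U := by
    have hev : ∀ᶠ t in nhdsWithin 0 (Set.Ici 0), γ t ∈ U := nhdsWithin_le_nhds <|
      (hγ 0).continuousAt.eventually_mem (hU.mem_nhds (hγ0.symm ▸ hz₁))
    exact mem_nhdsGE_iff_exists_Icc_subset.1 hev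
  have hvan : ∀ t ∈ Set.Icc 0 b, h (γ t) = 0 := by
    refine eq_zero_of_inner_deriv_le (c := c) (g' := fun t => γ t • deriv h (γ t))
      (fun t ht => (hh.differentiableAt (hU.mem_nhds (hball t ht))).hasDerivAt.scomp t (hγ t))
      (fun t ht => ?_) (by simp [hγ0, hzero])
    rw [inner_eq_norm_sq_mul_re_div, smul_eq_mul, mul_comm c]
    exact mul_le_mul_of_nonneg_left (hc _ (hball t ht)) (sq_nonneg _)
  refine (hh.analyticOnNhd hU).eqOn_zero_of_preconnected_of_frequently_eq_zero hUc hz₁ ?_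
  have htend : Filter.Tendsto γ (nhdsWithin 0 (Set.Ioi 0)) (nhdsWithin z₁ {z₁}ᶜ) := by
    have h' := (hγ 0).tendsto_nhdsNE (by simp [hγ0, hne])
    rw [hγ0] at h'
    exact h'.mono_left (nhdsGT_le_nhdsNE 0)
  refine htend.frequently (Filter.Eventually.frequently ?_)
  filter_upwards [Ioo_mem_nhdsGT hb] with t ht using hvan t (Set.Ioo_subset_Icc_self ht)

lemma abs_im_lt_mul_re_of_abs_arg_lt_arctan {w : ℂ} {τ : ℝ} (h : |w.arg| < Real.arctan τ)
    (hre : 0 < w.re) : |w.im| < τ * w.re := by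
  obtain ⟨h₁, h₂⟩ := abs_lt.1 (h.trans (Real.arctan_lt_pi_div_two τ))
  have harg : w.arg = Real.arctan (w.im / w.re) := by
    rw [← tan_arg, Real.arctan_tan h₁ h₂]
  rwa [harg, abs_lt, ← Real.arctan_neg, Real.arctan_lt_arctan_iff, Real.arctan_lt_arctan_iff,
    ← abs_lt, abs_div, abs_of_pos hre, div_lt_iff₀ hre] at h

lemma re_nonneg_of_abs_arg_lt_arctan {w : ℂ} {τ : ℝ} (h : |w.arg| < Real.arctan τ) : 0 ≤ w.re :=
  abs_arg_le_pi_div_two_iff.1 (h.trans (Real.arctan_lt_pi_div_two τ)).le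

lemma mul_deriv_dslope_div_deriv {f : ℂ → ℂ} {z : ℂ} (hz : z ≠ 0) (hf0 : f 0 = 0)
    (hf : DifferentiableAt ℂ f z) (hf' : DifferentiableAt ℂ (deriv f) z) (hne : deriv f z ≠ 0) :
    z * deriv (fun w => dslope f 0 w / deriv f w) z =
      1 - dslope f 0 z / deriv f z * (1 + z * deriv (deriv f) z / deriv f z) := by
  have hdslope : ∀ w ≠ 0, dslope f 0 w = f w / w := fun w hw => by
    rw [dslope_of_ne _ hw, slope_def_field, hf0, sub_zero, sub_zero]
  have hloc : (fun w => dslope f 0 w / deriv f w) =ᶠ[nhds z] fun w => f w / w / deriv f w := by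
    filter_upwards [isOpen_ne.mem_nhds hz] with w hw
    rw [hdslope w hw]
  have hd := (hf.hasDerivAt.div (hasDerivAt_id z) hz).div hf'.hasDerivAt hne
  rw [hloc.deriv_eq, hdslope z hz]
  refine (congrArg (z * ·) hd.deriv).trans ?_
  simp only [id, Pi.div_apply]
  field_simp
  ring

lemma re_eq_zero_and_three_le_im_sq {p q : ℂ} (hq : q.re = 0)
    (h : 1 - q * p ≤ -(‖1 - q‖ ^ 2 / 2 : ℝ)) : p.re = 0 ∧ 3 ≤ p.im ^ 2 := by
  have hnorm : ‖1 - q‖ ^ 2 = 1 + q.im ^ 2 := by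
    rw [← normSq_eq_norm_sq, normSq_apply]
    simp only [sub_re, sub_im, one_re, one_im, hq]
    ring
  rw [hnorm, ← ofReal_neg, le_def, ofReal_re, ofReal_im] at h
  have hre : 1 + q.im * p.im ≤ -((1 + q.im ^ 2) / 2) := by simpa [hq] using h.1
  have him : q.im = 0 ∨ p.re = 0 := by simpa [hq] using h.2
  have hb : q.im ≠ 0 := fun hb => by
    rw [hb] at hre
    linarith
  refine ⟨him.resolve_left hb, le_of_mul_le_mul_left ?_ (sq_pos_of_ne_zero hb)⟩
  have hlow : (3 + q.im ^ 2) / 2 ≤ -(q.im * p.im) := by linarith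
  calc q.im ^ 2 * 3 ≤ ((3 + q.im ^ 2) / 2) ^ 2 := by nlinarith [sq_nonneg (q.im ^ 2 - 3)]
    _ ≤ (-(q.im * p.im)) ^ 2 := pow_le_pow_left₀ (by positivity) hlow 2
    _ = q.im ^ 2 * p.im ^ 2 := by ring

lemma abs_im_lt_of_abs_arg_sub_lt_arctan {w : ℂ} {a r : ℝ} (ha : 0 < 1 + a)
    (h : |((a : ℂ) - w).arg| < Real.arctan (r / (1 + a))) (hre : (1 + w).re = 0) :
    |(1 + w).im| < r := by
  have hw : w.re = -1 := by
    rw [add_re, one_re] at hre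
    linarith
  have hsub : ((a : ℂ) - w).re = 1 + a := by
    rw [sub_re, ofReal_re, hw]
    ring
  have him := abs_im_lt_mul_re_of_abs_arg_lt_arctan h (hsub ▸ ha)
  rw [hsub, div_mul_cancel₀ _ ha.ne', sub_im, ofReal_im, zero_sub, abs_neg] at him
  rwa [add_im, one_im, zero_add]

theorem re_mul_deriv_div_pos_of_im_sq_lt_three {f : ℂ → ℂ} {R : ℝ}
    (hf : DifferentiableOn ℂ f (ball 0 R)) (hf0 : f 0 = 0) (hne : ∀ z ∈ ball 0 R, deriv f z ≠ 0)
    (hslit : ∀ z ∈ ball 0 R, (1 + z * deriv (deriv f) z / deriv f z).re = 0 →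
      (1 + z * deriv (deriv f) z / deriv f z).im ^ 2 < 3) {z : ℂ} (hz : z ∈ ball 0 R)
    (hz0 : z ≠ 0) : 0 < (z * deriv f z / f z).re := by
  have hR : 0 < R := pos_of_mem_ball hz
  have hf' : DifferentiableOn ℂ (deriv f) (ball 0 R) := hf.deriv isOpen_ball
  let q : ℂ → ℂ := fun w => dslope f 0 w / deriv f w
  have hq : DifferentiableOn ℂ q (ball 0 R) :=
    ((differentiableOn_dslope (ball_mem_nhds 0 hR)).2 hf).div hf' hne
  have hq0 : q 0 = 1 := by simp [q, hne 0 (mem_ball_self hR)]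
  suffices hpos : 0 < (q z).re by
    have hinv : z * deriv f z / f z = (q z)⁻¹ := by
      simp only [q]
      rw [dslope_of_ne _ hz0, slope_def_field, hf0, sub_zero, sub_zero, inv_div, div_div_eq_mul_div,
        mul_comm]
    rw [hinv, inv_re]
    exact div_pos hpos (normSq_pos.2 fun h => by simp [h] at hpos)
  by_contra! hneg
  obtain ⟨z₀, hz₀, hre, hpos⟩ := exists_eq_zero_and_forall_ball_norm_pos
    (continuous_re.comp_continuousOn hq.continuousOn) (by simp [hq0]) hz hneg
  have hz₀0 : z₀ ≠ 0 := by rintro rfl; simp [hq0] at hre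
  have hnhds := isOpen_ball.mem_nhds hz₀
  have hle := mul_deriv_le_of_re_pos_of_re_eq_zero hz₀0
    (hq.mono (ball_subset_ball (mem_ball_zero_iff.1 hz₀).le)) (hq.differentiableAt hnhds) hpos hre
  have hode := mul_deriv_dslope_div_deriv hz₀0 hf0 (hf.differentiableAt hnhds)
    (hf'.differentiableAt hnhds) (hne z₀ hz₀)
  rw [hode, hq0, one_re, mul_one] at hle
  obtain ⟨hp, hp3⟩ := re_eq_zero_and_three_le_im_sq hre hle
  exact hp3.not_gt (hslit z₀ hz₀ hp)

end ComplexOrder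

theorem stmt_2_general {f : ℂ → ℂ} {R β : ℝ} (hf : DifferentiableOn ℂ f (ball 0 R))
    (hf0 : f 0 = 0) (hf1 : deriv f 0 ≠ 0)
    (harg : ∀ z ∈ ball (0 : ℂ) R,
      |Complex.arg (((3 - 2 * β : ℝ) : ℂ) / 2 - z * deriv (deriv f) z / deriv f z)| <
        Real.arctan (2 * Real.sqrt 3 / (5 - 2 * β))) :
    ∀ z ∈ ball (0 : ℂ) R, z ≠ 0 → 0 < (z * deriv f z / f z).re := by
  intro z hz hz0
  have h0 : (0 : ℂ) ∈ ball 0 R := mem_ball_self (pos_of_mem_ball hz)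
  obtain ⟨a, ha⟩ : ∃ a : ℝ, a = (3 - 2 * β) / 2 := ⟨_, rfl⟩
  have hcast : ((3 - 2 * β : ℝ) : ℂ) / 2 = a := by rw [ha, ofReal_div, ofReal_ofNat]
  have hslope : 2 * √3 / (5 - 2 * β) = √3 / (1 + a) := by
    rw [show 5 - 2 * β = 2 * (1 + a) by rw [ha]; ring, mul_div_mul_left _ _ two_ne_zero]
  rw [hcast, hslope] at harg
  have hre : ∀ w ∈ ball 0 R, (w * deriv (deriv f) w / deriv f w).re ≤ a := fun w hw => by
    simpa using re_nonneg_of_abs_arg_lt_arctan (harg w hw)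
  have ha0 : 0 ≤ a := by simpa using hre 0 h0
  have hne : ∀ w ∈ ball 0 R, deriv f w ≠ 0 := fun w hw hzero =>
    hf1 <| eqOn_zero_of_re_mul_deriv_div_le isOpen_ball (convex_ball 0 R).isPreconnected
      (hf.deriv isOpen_ball) hre hw (by rintro rfl; exact hf1 hzero) hzero h0
  refine re_mul_deriv_div_pos_of_im_sq_lt_three hf hf0 hne (fun w hw hw0 => ?_) hz hz0
  rw [← sq_abs, ← Real.lt_sqrt (abs_nonneg _)]
  exact abs_im_lt_of_abs_arg_sub_lt_arctan (by linarith) (harg w hw) hw0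

theorem stmt_2 (f : ℂ → ℂ) (β : ℝ) (hβ : β < 1)
    (hf : DifferentiableOn ℂ f (ball 0 1)) (hf0 : f 0 = 0) (hf1 : deriv f 0 = 1)
    (harg : ∀ z ∈ ball (0 : ℂ) 1,
      |Complex.arg (((3 - 2 * β : ℝ) : ℂ) / 2 - z * deriv (deriv f) z / deriv f z)| <
        Real.arctan (2 * Real.sqrt 3 / (5 - 2 * β))) :
    ∀ z ∈ ball (0 : ℂ) 1, z ≠ 0 → 0 < (z * deriv f z / f z).re :=
  stmt_2_general hf hf0 (by simp [hf1]) harg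
end

section
/- Let f be analytic on the unit disc D with f(0)=0, f'(0)=1. If |z f''(z)/f'(z)| < √3 for all z in D, then f is starlike. -/
open Complex Metric Real

/-!
Let `q z = f z / (z f'(z))`. Differentiating `z q f' = f` gives `1 - z q' = q (1 + z f'' / f')`,
and starlikeness of `f` means `0 < re q`. Suppose `re q` first vanishes at `z₀`. Minimality of
`re q` on the circle through `z₀` makes `z₀ q'(z₀)` real, and the Schwarz lemma for the Cayley
transform of `q` bounds it above by `-(1 + |q(z₀)|²) / 2` (the lemma of Jack and Miller-Mocanu).
Writing `q(z₀) = i y`, the differential equation then says that `z₀ f''(z₀) / f'(z₀) = -1 + i b`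
with `|b| ≥ (3 + y²) / (2 |y|) ≥ √3`, a number of modulus at least `2`.
-/

open Filter Set Topology

theorem tendsto_mul_logDeriv_cobounded {𝕜 : Type*} [NontriviallyNormedField 𝕜] [CompleteSpace 𝕜]
    [CharZero 𝕜] {φ h : 𝕜 → 𝕜} {a : 𝕜} (hφ : AnalyticAt 𝕜 φ a) (hφa : φ a ≠ 0)
    (hh : AnalyticAt 𝕜 h a) (ha : h a = 0) (hne : ∀ᶠ z in 𝓝[≠] a, h z ≠ 0) :
    Tendsto (φ * logDeriv h) (𝓝[≠] a) (Bornology.cobounded 𝕜) := by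
  have horder_pos : 0 < meromorphicOrderAt h a := by
    rw [← tendsto_zero_iff_meromorphicOrderAt_pos hh.meromorphicAt, ← ha]
    exact hh.continuousAt.tendsto.mono_left nhdsWithin_le_nhds
  have horder_ne_top : meromorphicOrderAt h a ≠ ⊤ :=
    (meromorphicOrderAt_ne_top_iff_eventually_ne_zero hh.meromorphicAt).2 hne
  apply tendsto_cobounded_of_meromorphicOrderAt_neg
  rw [meromorphicOrderAt_mul_of_ne_zero hφ hφa,
    meromorphicOrderAt_logDeriv_eq_neg_one hh.meromorphicAt horder_pos.ne' horder_ne_top]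
  decide

theorem ne_zero_of_norm_mul_logDeriv_le {h : ℂ → ℂ} {U : Set ℂ} {C : ℝ} {a : ℂ} (hU : IsOpen U)
    (hUc : IsPreconnected U) (hh : DifferentiableOn ℂ h U) (h0U : 0 ∈ U) (h0 : h 0 ≠ 0)
    (hb : ∀ z ∈ U, ‖z * logDeriv h z‖ ≤ C) (ha : a ∈ U) : h a ≠ 0 := by
  intro hha
  have ha0 : a ≠ 0 := by
    rintro rfl
    exact h0 hha
  have hhU : AnalyticOnNhd ℂ h U := hh.analyticOnNhd hU
  have hne : ∀ᶠ z in 𝓝[≠] a, h z ≠ 0 :=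
    (hhU a ha).eventually_eq_zero_or_eventually_ne_zero.resolve_left fun hev ↦
      h0 (hhU.eqOn_zero_of_preconnected_of_eventuallyEq_zero hUc ha hev h0U)
  have hlarge : ∀ᶠ z in 𝓝[≠] a, C < ‖z * logDeriv h z‖ :=
    (tendsto_norm_cobounded_atTop.comp <| tendsto_mul_logDeriv_cobounded analyticAt_id ha0
      (hhU a ha) hha hne).eventually_gt_atTop C
  have hmem : ∀ᶠ z in 𝓝[≠] a, z ∈ U := nhdsWithin_le_nhds (hU.mem_nhds ha)
  obtain ⟨z, hz, hzU⟩ := (hlarge.and hmem).exists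
  exact (hb z hzU).not_gt hz

theorem norm_one_sub_le_mul_norm_one_add_iff {w : ℂ} {c : ℝ} (hc : 0 ≤ c) :
    ‖1 - w‖ ≤ c * ‖1 + w‖ ↔ (1 - c ^ 2) * (1 + ‖w‖ ^ 2) ≤ 2 * (1 + c ^ 2) * w.re := by
  have hsub : ‖1 - w‖ ^ 2 = 1 + ‖w‖ ^ 2 - 2 * w.re := by
    simp only [Complex.sq_norm, normSq_apply, sub_re, sub_im, one_re, one_im]
    ring
  have hadd : ‖1 + w‖ ^ 2 = 1 + ‖w‖ ^ 2 + 2 * w.re := by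
    simp only [Complex.sq_norm, normSq_apply, add_re, add_im, one_re, one_im]
    ring
  rw [← sq_le_sq₀ (norm_nonneg _) (by positivity), mul_pow, hsub, hadd]
  constructor <;> intro h <;> linarith

theorem one_sub_sq_mul_one_add_norm_sq_le_mul_re {q : ℂ → ℂ} {r : ℝ} {z : ℂ}
    (hq : DifferentiableOn ℂ q (ball 0 r)) (hq0 : q 0 = 1)
    (hpos : ∀ z ∈ ball (0 : ℂ) r, 0 < (q z).re) (hz : z ∈ ball (0 : ℂ) r) :
    (1 - (‖z‖ / r) ^ 2) * (1 + ‖q z‖ ^ 2) ≤ 2 * (1 + (‖z‖ / r) ^ 2) * (q z).re := by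
  have hr : 0 < r := pos_of_mem_ball hz
  have hne : ∀ z ∈ ball (0 : ℂ) r, 1 + q z ≠ 0 := fun z hz h ↦ by
    have hre := congrArg re h
    simp only [add_re, one_re, zero_re] at hre
    linarith [hpos z hz]
  have hmaps : MapsTo (fun z ↦ (1 - q z) / (1 + q z)) (ball 0 r)
      (closedBall ((1 - q 0) / (1 + q 0)) 1) := fun z hz ↦ by
    rw [hq0, sub_self, zero_div, mem_closedBall_zero_iff, norm_div]
    refine div_le_of_le_mul₀ (norm_nonneg _) zero_le_one ?_
    rw [norm_one_sub_le_mul_norm_one_add_iff zero_le_one]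
    linarith [hpos z hz]
  have hschwarz := dist_le_div_mul_dist_of_mapsTo_ball
    ((hq.const_sub 1).fun_div (hq.const_add 1) hne) hmaps hz
  simp only [hq0, sub_self, zero_div, dist_zero_right, norm_div] at hschwarz
  rw [← norm_one_sub_le_mul_norm_one_add_iff (by positivity)]
  rwa [div_le_iff₀ (norm_pos_iff.2 (hne z hz)), one_div_mul_eq_div] at hschwarz

theorem nonpos_of_hasDerivAt_of_isLocalMinOn_Iic {φ : ℝ → ℝ} {φ' a : ℝ} (hφ : HasDerivAt φ φ' a)
    (hmin : IsLocalMinOn φ (Iic a) a) : φ' ≤ 0 := by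
  have hcone : -1 ∈ posTangentConeAt (Iic a) a :=
    mem_posTangentConeAt_of_segment_subset <|
      (convex_Iic a).segment_subset self_mem_Iic (by simp)
  simpa using hmin.hasFDerivWithinAt_nonneg hφ.hasFDerivAt.hasFDerivWithinAt hcone

theorem im_mul_deriv_eq_zero_of_isMinOn_sphere {q : ℂ → ℂ} {z₀ : ℂ} (hq : DifferentiableAt ℂ q z₀)
    (hmin : IsMinOn (fun z ↦ (q z).re) (sphere 0 ‖z₀‖) z₀) : (z₀ * deriv q z₀).im = 0 := by
  have hcircle : HasDerivAt (fun θ : ℝ ↦ z₀ * cexp (θ * I)) (z₀ * I) 0 := by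
    simpa using ((ofRealCLM.hasDerivAt (x := 0)).mul_const I).cexp.const_mul z₀
  have hq' : HasDerivAt q (deriv q z₀) (z₀ * cexp ((0 : ℝ) * I)) := by
    simpa using hq.hasDerivAt
  have hre : HasDerivAt (fun θ : ℝ ↦ (q (z₀ * cexp (θ * I))).re) (deriv q z₀ * (z₀ * I)).re 0 :=
    reCLM.hasFDerivAt.comp_hasDerivAt 0 (hq'.comp (0 : ℝ) hcircle)
  have hmin0 : IsLocalMin (fun θ : ℝ ↦ (q (z₀ * cexp (θ * I))).re) 0 :=
    Eventually.of_forall fun θ ↦ by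
      simpa using hmin (show z₀ * cexp (θ * I) ∈ sphere 0 ‖z₀‖ by simp [norm_exp_ofReal_mul_I])
  have hzero := hmin0.hasDerivAt_eq_zero hre
  rw [← mul_assoc, mul_I_re, neg_eq_zero] at hzero
  rwa [mul_comm]

theorem re_mul_deriv_le_of_re_eq_zero {q : ℂ → ℂ} {z₀ : ℂ}
    (hq : DifferentiableOn ℂ q (ball 0 ‖z₀‖)) (hq0 : q 0 = 1)
    (hpos : ∀ z ∈ ball (0 : ℂ) ‖z₀‖, 0 < (q z).re) (hqz₀ : DifferentiableAt ℂ q z₀)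
    (hre : (q z₀).re = 0) : (z₀ * deriv q z₀).re ≤ -(1 + ‖q z₀‖ ^ 2) / 2 := by
  have hz₀ : 0 < ‖z₀‖ := norm_pos_iff.2 <| by
    rintro rfl
    simp [hq0] at hre
  have hq' : HasDerivAt q (deriv q z₀) ((1 : ℝ) * z₀) := by simpa using hqz₀.hasDerivAt
  have hline : HasDerivAt (fun t : ℝ ↦ (t : ℂ) * z₀) z₀ 1 := by
    simpa using (ofRealCLM.hasDerivAt (x := 1)).mul_const z₀
  have hray : HasDerivAt (fun t : ℝ ↦ q (t * z₀)) (deriv q z₀ * z₀) 1 := hq'.comp (1 : ℝ) hline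
  have hrayRe : HasDerivAt (fun t : ℝ ↦ (q (t * z₀)).re) (deriv q z₀ * z₀).re 1 :=
    reCLM.hasFDerivAt.comp_hasDerivAt 1 hray
  have hsq : HasDerivAt (fun t : ℝ ↦ t ^ 2) 2 1 := by simpa using hasDerivAt_pow 2 (1 : ℝ)
  -- The deficit in the Schwarz inequality along the ray is nonnegative and vanishes at `t = 1`.
  let deficit : ℝ → ℝ := fun t ↦
    2 * (1 + t ^ 2) * (q (t * z₀)).re - (1 - t ^ 2) * (1 + ‖q (t * z₀)‖ ^ 2)
  have hderiv : HasDerivAt deficit (4 * (deriv q z₀ * z₀).re + 2 * (1 + ‖q z₀‖ ^ 2)) 1 := by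
    refine ((((hsq.const_add 1).const_mul 2).mul hrayRe).sub
      ((hsq.const_sub 1).mul (hray.norm_sq.const_add 1))).congr_deriv ?_
    simp only [ofReal_one, one_mul, hre]
    ring
  have hmin : IsLocalMinOn deficit (Iic 1) 1 := by
    filter_upwards [self_mem_nhdsWithin, nhdsWithin_le_nhds (lt_mem_nhds one_pos)] with t ht ht0
    rcases (show t ≤ 1 from ht).eq_or_lt with rfl | ht1
    · exact le_rfl
    have hnorm : ‖(t : ℂ) * z₀‖ = t * ‖z₀‖ := by simp [abs_of_pos ht0]
    have hschwarz := one_sub_sq_mul_one_add_norm_sq_le_mul_re hq hq0 hpos (z := t * z₀) (by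
      rw [mem_ball_zero_iff, hnorm]
      exact mul_lt_of_lt_one_left hz₀ ht1)
    rw [hnorm, mul_div_cancel_right₀ _ hz₀.ne'] at hschwarz
    simpa [deficit, hre] using hschwarz
  have hle := nonpos_of_hasDerivAt_of_isLocalMinOn_Iic hderiv hmin
  rw [mul_comm z₀]
  linarith

theorem exists_eq_zero_and_forall_mem_ball_pos {E : Type*} [NormedAddCommGroup E]
    [NormedSpace ℝ E] [ProperSpace E] {u : E → ℝ} {r : ℝ} (hu : ContinuousOn u (ball 0 r))
    (hu0 : 0 < u 0) {z₁ : E} (hz₁ : z₁ ∈ ball 0 r) (huz₁ : u z₁ ≤ 0) :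
    ∃ z₀ ∈ ball (0 : E) r, u z₀ = 0 ∧ (∀ z ∈ ball (0 : E) ‖z₀‖, 0 < u z) ∧
      ∀ z ∈ closedBall (0 : E) ‖z₀‖, 0 ≤ u z := by
  have hsub : closedBall (0 : E) ‖z₁‖ ⊆ ball 0 r :=
    closedBall_subset_ball (mem_ball_zero_iff.1 hz₁)
  have hcompact : IsCompact (closedBall (0 : E) ‖z₁‖ ∩ u ⁻¹' Iic 0) :=
    (isCompact_closedBall 0 ‖z₁‖).of_isClosed_subset
      ((hu.mono hsub).preimage_isClosed_of_isClosed isClosed_closedBall isClosed_Iic)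
      inter_subset_left
  obtain ⟨z₀, ⟨hz₀, huz₀⟩, hmin⟩ :=
    hcompact.exists_isMinOn ⟨z₁, by simp, huz₁⟩ continuous_norm.continuousOn
  have hz₀z₁ : ‖z₀‖ ≤ ‖z₁‖ := mem_closedBall_zero_iff.1 hz₀
  have hz₀ne : z₀ ≠ 0 := by
    rintro rfl
    exact hu0.not_ge huz₀
  have hpos : ∀ z ∈ ball (0 : E) ‖z₀‖, 0 < u z := fun z hz ↦ by
    by_contra! hle
    have hlt : ‖z‖ < ‖z₀‖ := mem_ball_zero_iff.1 hz
    exact hlt.not_ge (hmin ⟨mem_closedBall_zero_iff.2 (hlt.le.trans hz₀z₁), hle⟩)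
  have hnonneg : ∀ z ∈ closedBall (0 : E) ‖z₀‖, 0 ≤ u z := by
    have hclosure : closure (ball (0 : E) ‖z₀‖) = closedBall 0 ‖z₀‖ :=
      closure_ball 0 (norm_ne_zero_iff.2 hz₀ne)
    rw [← hclosure]
    refine fun z hz ↦ le_on_closure (fun z hz ↦ (hpos z hz).le) continuousOn_const
      (hu.mono ?_) hz
    exact hclosure ▸ (closedBall_subset_closedBall hz₀z₁).trans hsub
  exact ⟨z₀, hsub hz₀, le_antisymm huz₀ (hnonneg z₀ (by simp)), hpos, hnonneg⟩

theorem re_pos_of_admissible {q : ℂ → ℂ} {r : ℝ} (hq : DifferentiableOn ℂ q (ball 0 r))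
    (hq0 : q 0 = 1)
    (hadm : ∀ z ∈ ball (0 : ℂ) r, (q z).re = 0 → (z * deriv q z).im = 0 →
      ¬ (z * deriv q z).re ≤ -(1 + ‖q z‖ ^ 2) / 2) :
    ∀ z ∈ ball (0 : ℂ) r, 0 < (q z).re := by
  by_contra! ⟨z₁, hz₁, hqz₁⟩
  obtain ⟨z₀, hz₀, hre, hpos, hnonneg⟩ := exists_eq_zero_and_forall_mem_ball_pos
    (continuous_re.comp_continuousOn hq.continuousOn) (by simp [hq0]) hz₁ hqz₁
  have hqz₀ : DifferentiableAt ℂ q z₀ := hq.differentiableAt (isOpen_ball.mem_nhds hz₀)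
  have hmin : IsMinOn (fun z ↦ (q z).re) (sphere 0 ‖z₀‖) z₀ := fun z hz ↦
    hre.trans_le (hnonneg z (sphere_subset_closedBall hz))
  exact hadm z₀ hz₀ hre (im_mul_deriv_eq_zero_of_isMinOn_sphere hqz₀ hmin)
    (re_mul_deriv_le_of_re_eq_zero
      (hq.mono (ball_subset_ball (mem_ball_zero_iff.1 hz₀).le)) hq0 hpos hqz₀ hre)

/-- The function `z ↦ f z / (z * f' z)` of a function with `f 0 = 0`; its real part is positive
exactly where that of `z * f' z / f z` is. Encoding the numerator by `dslope` fills in the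
removable singularity at `0`. -/
noncomputable def starlikeQuotient (f : ℂ → ℂ) (z : ℂ) : ℂ :=
  dslope f 0 z / deriv f z

section StarlikeQuotient

variable {f : ℂ → ℂ} {U : Set ℂ} {z : ℂ}

theorem starlikeQuotient_zero (hf : deriv f 0 ≠ 0) : starlikeQuotient f 0 = 1 := by
  rw [starlikeQuotient, dslope_same, div_self hf]

theorem inv_starlikeQuotient (hf0 : f 0 = 0) (hz : z ≠ 0) :
    (starlikeQuotient f z)⁻¹ = z * deriv f z / f z := by
  rw [starlikeQuotient, dslope_of_ne f hz, slope_def_field, hf0, sub_zero, sub_zero, inv_div,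
    div_div_eq_mul_div, mul_comm z]

theorem mul_starlikeQuotient_mul_deriv (hz : deriv f z ≠ 0) :
    z * starlikeQuotient f z * deriv f z = f z - f 0 := by
  rw [starlikeQuotient, mul_assoc, div_mul_cancel₀ _ hz]
  simpa using sub_smul_dslope f 0 z

theorem differentiableOn_starlikeQuotient (hU : IsOpen U) (h0U : 0 ∈ U)
    (hf : DifferentiableOn ℂ f U) (hf' : ∀ z ∈ U, deriv f z ≠ 0) :
    DifferentiableOn ℂ (starlikeQuotient f) U :=
  ((differentiableOn_dslope (hU.mem_nhds h0U)).2 hf).div (hf.deriv hU) hf'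

theorem one_sub_mul_deriv_starlikeQuotient (hU : IsOpen U) (h0U : 0 ∈ U)
    (hf : DifferentiableOn ℂ f U) (hf' : ∀ z ∈ U, deriv f z ≠ 0) (hz : z ∈ U) :
    1 - z * deriv (starlikeQuotient f) z =
      starlikeQuotient f z * (1 + z * logDeriv (deriv f) z) := by
  have hUz : U ∈ 𝓝 z := hU.mem_nhds hz
  have hfactor : (fun z ↦ z * starlikeQuotient f z * deriv f z) =ᶠ[𝓝 z] fun z ↦ f z - f 0 :=
    eventually_of_mem hUz fun z hz ↦ mul_starlikeQuotient_mul_deriv (hf' z hz)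
  have hquot : HasDerivAt (starlikeQuotient f) (deriv (starlikeQuotient f) z) z :=
    ((differentiableOn_starlikeQuotient hU h0U hf hf').differentiableAt hUz).hasDerivAt
  have hderiv : HasDerivAt (deriv f) (deriv (deriv f) z) z :=
    ((hf.deriv hU).differentiableAt hUz).hasDerivAt
  have hproduct := (((hasDerivAt_id' z).fun_mul hquot).fun_mul hderiv).unique
    (((hf.differentiableAt hUz).hasDerivAt.sub_const (f 0)).congr_of_eventuallyEq hfactor)
  have hne := hf' z hz
  rw [logDeriv_apply]
  field_simp
  linear_combination -hproduct

end StarlikeQuotient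

theorem two_le_norm_of_one_sub_eq_mul_one_add {w d g : ℂ} (hw : w.re = 0) (hd : d.im = 0)
    (hdw : d.re ≤ -(1 + ‖w‖ ^ 2) / 2) (h : 1 - d = w * (1 + g)) : 2 ≤ ‖g‖ := by
  have hw_norm : ‖w‖ ^ 2 = w.im ^ 2 := by rw [Complex.sq_norm, normSq_apply, hw]; ring
  have hre : 1 - d.re = -(w.im * g.im) := by simpa [hw] using congrArg re h
  have him : w.im = 0 ∨ 1 + g.re = 0 := by simpa [hw, hd] using congrArg im h
  have hbound : (3 + w.im ^ 2) / 2 ≤ -(w.im * g.im) := by rw [hw_norm] at hdw; linarith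
  have hwim : w.im ≠ 0 := fun h0 ↦ by norm_num [h0] at hbound
  have hg_re : g.re = -1 := by linarith [him.resolve_left hwim]
  have hg_im : 3 ≤ g.im ^ 2 := by
    have hsq : ((3 + w.im ^ 2) / 2) ^ 2 ≤ w.im ^ 2 * g.im ^ 2 := by
      simpa [mul_pow] using pow_le_pow_left₀ (by positivity) hbound 2
    have hamgm : w.im ^ 2 * 3 ≤ ((3 + w.im ^ 2) / 2) ^ 2 := by
      linarith [sq_nonneg (w.im ^ 2 - 3)]
    exact le_of_mul_le_mul_left (hamgm.trans hsq) (by positivity)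
  refine (sq_le_sq₀ zero_le_two (norm_nonneg g)).1 ?_
  rw [Complex.sq_norm, normSq_apply, hg_re]
  linarith

theorem stmt_4_general {f : ℂ → ℂ} {r : ℝ} (hf : DifferentiableOn ℂ f (ball 0 r)) (hf0 : f 0 = 0)
    (hf1 : deriv f 0 ≠ 0)
    (hb : ∀ z ∈ ball (0 : ℂ) r, ‖z * deriv (deriv f) z / deriv f z‖ < 2) :
    ∀ z ∈ ball (0 : ℂ) r, z ≠ 0 → 0 < (z * deriv f z / f z).re := by
  intro z hz hz0
  have hball : IsOpen (ball (0 : ℂ) r) := isOpen_ball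
  have h0 : (0 : ℂ) ∈ ball 0 r := mem_ball_self (pos_of_mem_ball hz)
  have hlog : ∀ z ∈ ball (0 : ℂ) r, ‖z * logDeriv (deriv f) z‖ < 2 := by
    simpa only [logDeriv_apply, mul_div_assoc] using hb
  have hf' : ∀ z ∈ ball (0 : ℂ) r, deriv f z ≠ 0 := fun z hz ↦
    ne_zero_of_norm_mul_logDeriv_le hball (convex_ball 0 r).isPreconnected (hf.deriv hball) h0 hf1
      (fun z hz ↦ (hlog z hz).le) hz
  have hpos : 0 < (starlikeQuotient f z).re :=
    re_pos_of_admissible (differentiableOn_starlikeQuotient hball h0 hf hf')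
      (starlikeQuotient_zero hf1) (fun z hz hre him hle ↦ (hlog z hz).not_ge <|
        two_le_norm_of_one_sub_eq_mul_one_add hre him hle <|
          one_sub_mul_deriv_starlikeQuotient hball h0 hf hf' hz) z hz
  rw [← inv_starlikeQuotient hf0 hz0, inv_re]
  exact div_pos hpos (normSq_pos.2 fun h ↦ by simp [h] at hpos)

theorem stmt_4 (f : ℂ → ℂ)
    (hf : DifferentiableOn ℂ f (ball 0 1)) (hf0 : f 0 = 0) (hf1 : deriv f 0 = 1)
    (hb : ∀ z ∈ ball (0 : ℂ) 1, ‖z * deriv (deriv f) z / deriv f z‖ < Real.sqrt 3) :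
    ∀ z ∈ ball (0 : ℂ) 1, z ≠ 0 → 0 < (z * deriv f z / f z).re :=
  stmt_4_general hf hf0 (hf1 ▸ one_ne_zero) fun z hz ↦
    (hb z hz).trans ((Real.sqrt_lt' two_pos).2 (by norm_num))
end

section
/- Let f be analytic on the unit disc D with f(0)=0, f'(0)=1, and let γ ≥ 0. If |arg(z f'(z)/f(z) + γ)| < arctan(1/(1+γ)) for all z in D, then Re(f(z)/z) > 0 for all z in D (with f(z)/z interpreted as 1 at z = 0). -/
open Complex Metric Real

/-!
Write `f z = z * p z`, so that `z * f' z / f z = 1 + z * p' z / p z`. If `Re p` is not positive on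
the disc, let `z₀` be a point of least modulus with `Re p ≤ 0`. Then `w = (p - 1) / (p + 1)` attains
its largest modulus over the disc `‖z‖ ≤ ‖z₀‖` at `z₀`, and Jack's lemma `1 ≤ z₀ * w' z₀ / w z₀`
shows that `z₀ * p' z₀` is real and at most `-(1 + ‖p z₀‖ ^ 2) / 2`. If `p z₀ ≠ 0`, then by AM-GM
`z₀ * p' z₀ / p z₀` is purely imaginary of modulus at least `1`, so `z₀ * f' z₀ / f z₀ + γ` lies
outside the sector. If `p z₀ = 0`, then `z₀` is a simple zero of `f`, and the real part of
`z * f' z / f z` is unbounded below near `z₀`.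
-/

open Filter Set
open scoped Topology ComplexOrder ComplexConjugate

lemma exists_eq_zero_forall_closedBall_nonneg {E : Type*} [NormedAddCommGroup E] [NormedSpace ℝ E]
    [ProperSpace E] {u : E → ℝ} {x : E} (hu : ContinuousOn u (closedBall 0 ‖x‖)) (h0 : 0 < u 0)
    (hx : u x ≤ 0) : ∃ y ∈ closedBall 0 ‖x‖, u y = 0 ∧ ∀ z ∈ closedBall 0 ‖y‖, 0 ≤ u z := by
  have compact_nonpos : IsCompact (closedBall 0 ‖x‖ ∩ u ⁻¹' Iic 0) :=
    (isCompact_closedBall _ _).of_isClosed_subset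
      (hu.preimage_isClosed_of_isClosed isClosed_closedBall isClosed_Iic) inter_subset_left
  obtain ⟨y, ⟨hyx, hy⟩, hmin⟩ :=
    compact_nonpos.exists_isMinOn ⟨x, by simp, hx⟩ continuous_norm.continuousOn
  have hball : closedBall 0 ‖y‖ ⊆ closedBall (0 : E) ‖x‖ :=
    closedBall_subset_closedBall (mem_closedBall_zero_iff.1 hyx)
  have pos_of_norm_lt : ∀ z ∈ ball 0 ‖y‖, 0 < u z := fun z hz ↦ by
    by_contra! hz'
    exact (mem_ball_zero_iff.1 hz).not_ge (hmin ⟨hball (ball_subset_closedBall hz), hz'⟩)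
  have hy0 : ‖y‖ ≠ 0 := norm_ne_zero_iff.2 fun h ↦ (h ▸ hy).not_gt h0
  have nonneg : ∀ z ∈ closedBall 0 ‖y‖, 0 ≤ u z := by
    rw [← closure_ball _ hy0] at hball ⊢
    intro z hz
    exact le_on_closure (fun w hw ↦ (pos_of_norm_lt w hw).le) continuousOn_const (hu.mono hball) hz
  exact ⟨y, hyx, le_antisymm hy (nonneg y (by simp)), nonneg⟩

lemma deriv_eq_dslope_add_smul_deriv_dslope {𝕜 E : Type*} [NontriviallyNormedField 𝕜]
    [NormedAddCommGroup E] [NormedSpace 𝕜 E] {f : 𝕜 → E} {a b : 𝕜}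
    (h : DifferentiableAt 𝕜 (dslope f a) b) :
    deriv f b = dslope f a b + (b - a) • deriv (dslope f a) b := by
  have f_eq : f = fun z ↦ (z - a) • dslope f a z + f a :=
    funext fun z ↦ by rw [sub_smul_dslope, sub_add_cancel]
  have hderiv := ((((hasDerivAt_id b).sub_const a).smul h.hasDerivAt).add_const (f a)).deriv
  rw [add_comm, ← one_smul 𝕜 (dslope f a b)]
  exact (congrArg (deriv · b) f_eq).trans hderiv

lemma sub_mul_logDeriv_eq_one_add {𝕜 : Type*} [NontriviallyNormedField 𝕜] {f : 𝕜 → 𝕜} {a b : 𝕜}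
    (ha : f a = 0) (hb : f b ≠ 0) (h : DifferentiableAt 𝕜 f b) :
    (b - a) * logDeriv f b = 1 + (b - a) * logDeriv (dslope f a) b := by
  have hba : b ≠ a := fun hba ↦ hb (hba ▸ ha)
  have f_eq : (b - a) * dslope f a b = f b := by simpa [ha] using sub_smul_dslope f a b
  have dslope_ne : dslope f a b ≠ 0 := right_ne_zero_of_mul (f_eq ▸ hb)
  have hsub : b - a ≠ 0 := sub_ne_zero.2 hba
  have f_deriv := deriv_eq_dslope_add_smul_deriv_dslope ((differentiableAt_dslope_of_ne hba).2 h)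
  rw [logDeriv_apply, logDeriv_apply, f_deriv, ← f_eq, smul_eq_mul]
  field_simp

lemma tendsto_sub_mul_logDeriv {𝕜 : Type*} [NontriviallyNormedField 𝕜] {f : 𝕜 → 𝕜} {z₀ : 𝕜}
    (hf' : ContinuousAt (deriv f) z₀) (h0 : f z₀ = 0) (h1 : deriv f z₀ ≠ 0) :
    Tendsto (fun z ↦ (z - z₀) * logDeriv f z) (𝓝[≠] z₀) (𝓝 1) := by
  have hslope := (differentiableAt_of_deriv_ne_zero h1).hasDerivAt.tendsto_slope
  have hquot := (hf'.tendsto.mono_left nhdsWithin_le_nhds).div hslope h1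
  rw [div_self h1] at hquot
  refine hquot.congr fun z ↦ ?_
  simp only [Pi.div_apply, logDeriv_apply, slope_def_field, h0, sub_zero]
  rw [div_div_eq_mul_div]
  ring

lemma deriv_eq_zero_of_eventually_le_re_mul_logDeriv {f : ℂ → ℂ} {z₀ : ℂ}
    (hf' : ContinuousAt (deriv f) z₀) (h0 : f z₀ = 0) (hz₀ : z₀ ≠ 0) {c : ℝ}
    (hc : ∀ᶠ z in 𝓝[≠] z₀, c ≤ (z * logDeriv f z).re) : deriv f z₀ = 0 := by
  by_contra h1
  have hray : Tendsto (fun s : ℝ ↦ (s : ℂ) * z₀) (𝓝[<] 1) (𝓝[≠] z₀) := by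
    refine tendsto_nhdsWithin_iff.2 ⟨tendsto_nhdsWithin_of_tendsto_nhds ?_, ?_⟩
    · exact Continuous.tendsto' (by fun_prop) _ _ (by simp)
    · filter_upwards [self_mem_nhdsWithin] with s hs
      simpa [hz₀] using hs.ne
  have hs : Tendsto (fun s : ℝ ↦ s) (𝓝[<] 1) (𝓝 1) := tendsto_nhdsWithin_of_tendsto_nhds tendsto_id
  have hpole : Tendsto (fun s : ℝ ↦ (s - 1) * (s * z₀ * logDeriv f (s * z₀)).re)
      (𝓝[<] 1) (𝓝 1) := by
    have hlim := (continuous_re.tendsto _).comp ((tendsto_sub_mul_logDeriv hf' h0 h1).comp hray)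
    convert hs.mul hlim using 2 with s
    · rw [Function.comp_apply, ← re_ofReal_mul, ← re_ofReal_mul]
      congr 1
      simp only [Function.comp_apply]
      push_cast
      ring
    · simp
  have hbound : Tendsto (fun s : ℝ ↦ (s - 1) * c) (𝓝[<] 1) (𝓝 0) := by
    simpa using (hs.sub_const 1).mul_const c
  refine absurd (le_of_tendsto_of_tendsto hpole hbound ?_) (not_le.2 one_pos)
  filter_upwards [hray.eventually hc, self_mem_nhdsWithin] with s hcs hs1
  exact mul_le_mul_of_nonpos_left hcs (sub_nonpos.2 (le_of_lt hs1))

lemma norm_sub_one_le_norm_add_one_iff {z : ℂ} : ‖z - 1‖ ≤ ‖z + 1‖ ↔ 0 ≤ z.re := by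
  rw [← sq_le_sq₀ (norm_nonneg _) (norm_nonneg _), ← normSq_eq_norm_sq, ← normSq_eq_norm_sq,
    normSq_sub, normSq_add]
  simp only [map_one, mul_one]
  constructor <;> intro h <;> linarith

lemma norm_sub_one_eq_norm_add_one {z : ℂ} (hz : z.re = 0) : ‖z - 1‖ = ‖z + 1‖ := by
  refine le_antisymm (norm_sub_one_le_norm_add_one_iff.2 hz.ge) ?_
  have hneg := (norm_sub_one_le_norm_add_one_iff (z := -z)).2 (by simp [hz])
  rwa [← neg_add', norm_neg, neg_add_eq_sub, norm_sub_rev] at hneg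

lemma add_one_ne_zero_of_re_nonneg {z : ℂ} (hz : 0 ≤ z.re) : z + 1 ≠ 0 := fun h ↦ by
  have hre := congrArg re h
  simp only [add_re, one_re, zero_re] at hre
  linarith

lemma sub_one_mul_add_one_of_re_eq_zero {z : ℂ} (hz : z.re = 0) :
    (z - 1) * (z + 1) = -((1 + ‖z‖ ^ 2 : ℝ) : ℂ) := by
  have hconj : conj z = -z := Complex.ext (by simp [hz]) (by simp)
  rw [ofReal_add, ofReal_pow, ← mul_conj', hconj, ofReal_one]
  ring

section MaximumOnDisc

variable {z₀ : ℂ}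

lemma mul_deriv_nonneg_of_isLocalMaxOn_re {f : ℂ → ℂ} {f' : ℂ} (hf : HasDerivAt f f' z₀)
    (hmax : IsLocalMaxOn (fun z ↦ (f z).re) (closedBall 0 ‖z₀‖) z₀) : 0 ≤ z₀ * f' := by
  have re_mul_le : ∀ y ∈ closedBall 0 ‖z₀‖, (y * f').re ≤ (z₀ * f').re := fun y hy ↦ by
    have hcone := sub_mem_posTangentConeAt_of_segment_subset
      ((convex_closedBall 0 ‖z₀‖).segment_subset (mem_closedBall_zero_iff.2 le_rfl) hy)
    have hre := reCLM.hasFDerivAt.comp z₀ (hf.hasFDerivAt.restrictScalars ℝ)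
    simpa [sub_mul] using hmax.hasFDerivWithinAt_nonpos hre.hasFDerivWithinAt hcone
  rcases eq_or_ne (z₀ * f') 0 with h0 | h0
  · exact h0.ge
  -- Rotating `z₀` so that its product with `f'` becomes the positive number `‖z₀ * f'‖`.
  have hrot := re_mul_le (conj (z₀ * f') / ‖z₀ * f'‖ * z₀) <| by
    have : ‖z₀ * f'‖ ≠ 0 := norm_ne_zero_iff.2 h0
    rw [mem_closedBall_zero_iff, norm_mul, norm_div, RCLike.norm_conj, norm_real, norm_norm,
      div_self this, one_mul]
  rw [mul_assoc, div_mul_eq_mul_div, conj_mul', sq, mul_self_div_self, ofReal_re] at hrot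
  exact re_eq_norm.1 (le_antisymm (re_le_norm _) hrot)

lemma mul_logDeriv_nonneg_of_isLocalMaxOn_norm {f : ℂ → ℂ} (hf : DifferentiableAt ℂ f z₀)
    (hmax : IsLocalMaxOn (fun z ↦ ‖f z‖) (closedBall 0 ‖z₀‖) z₀) : 0 ≤ z₀ * logDeriv f z₀ := by
  have hre : IsLocalMaxOn (fun z ↦ (conj (f z₀) * f z).re) (closedBall 0 ‖z₀‖) z₀ := by
    filter_upwards [hmax] with z hz
    calc (conj (f z₀) * f z).re ≤ ‖conj (f z₀) * f z‖ := re_le_norm _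
      _ = ‖f z₀‖ * ‖f z‖ := by rw [norm_mul, RCLike.norm_conj]
      _ ≤ ‖f z₀‖ * ‖f z₀‖ := by gcongr
      _ = (conj (f z₀) * f z₀).re := by rw [conj_mul', ← sq]; norm_cast
  have hnonneg := mul_deriv_nonneg_of_isLocalMaxOn_re (hf.hasDerivAt.const_mul (conj (f z₀))) hre
  have hnormSq : 0 ≤ (((normSq (f z₀))⁻¹ : ℝ) : ℂ) :=
    real_le_real.2 (inv_nonneg.2 (normSq_nonneg _))
  calc 0 ≤ z₀ * (conj (f z₀) * deriv f z₀) * ((normSq (f z₀))⁻¹ : ℝ) :=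
        mul_nonneg hnonneg hnormSq
    _ = z₀ * logDeriv f z₀ := by rw [logDeriv_apply, div_eq_mul_inv, inv_def]; ring

lemma isMaxOn_norm_dslope {w : ℂ → ℂ} (hw : DifferentiableOn ℂ w (ball 0 ‖z₀‖)) (h0 : w 0 = 0)
    (hz₀ : z₀ ≠ 0) (hmax : IsMaxOn (fun z ↦ ‖w z‖) (closedBall 0 ‖z₀‖) z₀) :
    IsMaxOn (fun z ↦ ‖dslope w 0 z‖) (closedBall 0 ‖z₀‖) z₀ := by
  have mul_dslope : ∀ z, z * dslope w 0 z = w z := by simpa [h0] using sub_smul_dslope w 0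
  have norm_dslope_z₀ : ‖dslope w 0 z₀‖ = ‖w z₀‖ / ‖z₀‖ := by
    rw [← mul_dslope z₀, norm_mul, mul_div_cancel_left₀ _ (norm_ne_zero_iff.2 hz₀)]
  intro z hz
  refine le_of_le_of_eq ?_ norm_dslope_z₀.symm
  rcases (mem_closedBall_zero_iff.1 hz).lt_or_eq with hlt | heq
  · refine norm_dslope_le_div_of_mapsTo_ball hw (fun y hy ↦ ?_) (mem_ball_zero_iff.2 hlt)
    simpa [h0] using hmax (ball_subset_closedBall hy)
  · rw [le_div_iff₀' (norm_pos_iff.2 hz₀), ← heq, ← norm_mul, mul_dslope]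
    exact hmax hz

/-- **Jack's lemma**. -/
lemma one_le_mul_logDeriv_of_isMaxOn_norm {w : ℂ → ℂ} (hw : DifferentiableOn ℂ w (ball 0 ‖z₀‖))
    (hwz₀ : DifferentiableAt ℂ w z₀) (h0 : w 0 = 0) (hne : w z₀ ≠ 0)
    (hmax : IsMaxOn (fun z ↦ ‖w z‖) (closedBall 0 ‖z₀‖) z₀) : 1 ≤ z₀ * logDeriv w z₀ := by
  have hz₀ : z₀ ≠ 0 := fun h ↦ hne (h ▸ h0)
  have hnonneg := mul_logDeriv_nonneg_of_isLocalMaxOn_norm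
    ((differentiableAt_dslope_of_ne hz₀).2 hwz₀) (isMaxOn_norm_dslope hw h0 hz₀ hmax).localize
  calc 1 ≤ 1 + z₀ * logDeriv (dslope w 0) z₀ := le_add_of_nonneg_right hnonneg
    _ = z₀ * logDeriv w z₀ := by
      simpa only [sub_zero] using (sub_mul_logDeriv_eq_one_add h0 hne hwz₀).symm

/-- **Nunokawa's lemma**. -/
lemma mul_deriv_le_of_forall_closedBall_re_nonneg {p : ℂ → ℂ}
    (hp : DifferentiableOn ℂ p (ball 0 ‖z₀‖)) (hpz₀ : DifferentiableAt ℂ p z₀) (h1 : p 0 = 1)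
    (hre : ∀ z ∈ closedBall 0 ‖z₀‖, 0 ≤ (p z).re) (hz₀ : (p z₀).re = 0) :
    z₀ * deriv p z₀ ≤ ((-((1 + ‖p z₀‖ ^ 2) / 2) : ℝ) : ℂ) := by
  have hadd := add_one_ne_zero_of_re_nonneg hz₀.ge
  have norm_eq := norm_sub_one_eq_norm_add_one hz₀
  have hsub : p z₀ - 1 ≠ 0 := norm_ne_zero_iff.1 (norm_eq ▸ norm_ne_zero_iff.2 hadd)
  have hmax : IsMaxOn (fun z ↦ ‖(p z - 1) / (p z + 1)‖) (closedBall 0 ‖z₀‖) z₀ := fun z hz ↦ by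
    simp only [mem_ofPred_eq, norm_div]
    rw [norm_eq, div_self (norm_ne_zero_iff.2 hadd)]
    exact div_le_one_of_le₀ (norm_sub_one_le_norm_add_one_iff.2 (hre z hz)) (norm_nonneg _)
  have jack := one_le_mul_logDeriv_of_isMaxOn_norm
    ((hp.sub_const 1).fun_div (hp.add_const 1) fun z hz ↦
      add_one_ne_zero_of_re_nonneg (hre z (ball_subset_closedBall hz)))
    ((hpz₀.sub_const 1).fun_div (hpz₀.add_const 1) hadd) (by simp [h1]) (div_ne_zero hsub hadd) hmax
  rw [logDeriv_div z₀ hsub hadd (hpz₀.sub_const 1) (hpz₀.add_const 1), logDeriv_apply,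
    logDeriv_apply, deriv_sub_const, deriv_add_const] at jack
  have hhalf : (0 : ℂ) ≤ ((1 + ‖p z₀‖ ^ 2) / 2 : ℝ) := real_le_real.2 (by positivity)
  calc z₀ * deriv p z₀
      = (p z₀ - 1) * (p z₀ + 1) / 2 *
          (z₀ * (deriv p z₀ / (p z₀ - 1) - deriv p z₀ / (p z₀ + 1))) := by field_simp; ring
    _ = -(((1 + ‖p z₀‖ ^ 2) / 2 : ℝ) * _) := by
        rw [sub_one_mul_add_one_of_re_eq_zero hz₀]; push_cast; ring
    _ ≤ -(((1 + ‖p z₀‖ ^ 2) / 2 : ℝ) * 1) := neg_le_neg (mul_le_mul_of_nonneg_left jack hhalf)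
    _ = ((-((1 + ‖p z₀‖ ^ 2) / 2) : ℝ) : ℂ) := by rw [mul_one, ofReal_neg]

end MaximumOnDisc

lemma abs_arg_lt_arctan_iff {z : ℂ} (hz : 0 < z.re) {t : ℝ} :
    |arg z| < Real.arctan t ↔ |z.im| < t * z.re := by
  obtain ⟨hlo, hhi⟩ := abs_lt.1 (abs_arg_lt_pi_div_two_iff.2 (Or.inl hz))
  rw [← Real.arctan_tan hlo hhi, tan_arg, abs_lt, ← Real.arctan_neg, Real.arctan_lt_arctan_iff,
    Real.arctan_lt_arctan_iff, ← abs_lt, abs_div, abs_of_pos hz, div_lt_iff₀ hz]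

lemma arctan_one_div_re_le_abs_arg {z : ℂ} (hz : 0 < z.re) (him : 1 ≤ |z.im|) :
    Real.arctan (1 / z.re) ≤ |arg z| := by
  rwa [← not_lt, abs_arg_lt_arctan_iff hz, one_div_mul_cancel hz.ne', not_lt]

lemma re_div_eq_zero_and_one_le_abs_im_div {a b : ℂ} (hb : b.re = 0) (hb0 : b ≠ 0)
    (ha : a ≤ ((-((1 + ‖b‖ ^ 2) / 2) : ℝ) : ℂ)) : (a / b).re = 0 ∧ 1 ≤ |(a / b).im| := by
  obtain ⟨a_re, a_im⟩ := le_def.1 ha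
  rw [ofReal_re] at a_re
  rw [ofReal_im] at a_im
  have hre : (a / b).re = 0 := by simp [div_re, hb, a_im]
  refine ⟨hre, ?_⟩
  rw [abs_im_eq_norm.2 hre, norm_div, one_le_div (norm_pos_iff.2 hb0)]
  calc ‖b‖ ≤ (1 + ‖b‖ ^ 2) / 2 := by linarith [two_mul_le_add_sq 1 ‖b‖]
    _ ≤ -a.re := le_neg_of_le_neg a_re
    _ ≤ ‖a‖ := (neg_le_abs _).trans (abs_re_le_norm a)

lemma exists_re_eq_zero_mul_deriv_le {p : ℂ → ℂ} {r : ℝ} (hp : DifferentiableOn ℂ p (ball 0 r))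
    (h1 : p 0 = 1) {x : ℂ} (hx : x ∈ ball 0 r) (hpx : (p x).re ≤ 0) :
    ∃ z₀ ∈ ball 0 r, z₀ ≠ 0 ∧ (p z₀).re = 0 ∧
      z₀ * deriv p z₀ ≤ ((-((1 + ‖p z₀‖ ^ 2) / 2) : ℝ) : ℂ) := by
  have hsub : closedBall 0 ‖x‖ ⊆ ball (0 : ℂ) r := closedBall_subset_ball (mem_ball_zero_iff.1 hx)
  obtain ⟨z₀, hz₀, p_re, hre⟩ := exists_eq_zero_forall_closedBall_nonneg (u := fun z ↦ (p z).re)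
    (continuous_re.comp_continuousOn (hp.continuousOn.mono hsub)) (by simp [h1]) hpx
  have z₀_ne : z₀ ≠ 0 := by
    rintro rfl
    simp [h1] at p_re
  have hball : ball 0 ‖z₀‖ ⊆ ball (0 : ℂ) r :=
    ball_subset_ball (mem_ball_zero_iff.1 (hsub hz₀)).le
  exact ⟨z₀, hsub hz₀, z₀_ne, p_re, mul_deriv_le_of_forall_closedBall_re_nonneg (hp.mono hball)
    (hp.differentiableAt (isOpen_ball.mem_nhds (hsub hz₀))) h1 hre p_re⟩

lemma re_dslope_pos_of_abs_arg_lt {f : ℂ → ℂ} {γ : ℝ} (hγ : -1 < γ)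
    (hf : DifferentiableOn ℂ f (ball 0 1)) (hf0 : f 0 = 0) (hf1 : deriv f 0 = 1)
    (harg : ∀ z ∈ ball (0 : ℂ) 1, z ≠ 0 →
      |arg (z * logDeriv f z + γ)| < Real.arctan (1 / (1 + γ)))
    {x : ℂ} (hx : x ∈ ball (0 : ℂ) 1) : 0 < (dslope f 0 x).re := by
  by_contra! hneg
  have hp : DifferentiableOn ℂ (dslope f 0) (ball 0 1) :=
    (differentiableOn_dslope (ball_mem_nhds 0 one_pos)).2 hf
  obtain ⟨z₀, hz₀, z₀_ne, p_re, nunokawa⟩ :=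
    exists_re_eq_zero_mul_deriv_le hp ((dslope_same f 0).trans hf1) hx hneg
  have hnhds : ball 0 1 ∈ 𝓝 z₀ := isOpen_ball.mem_nhds hz₀
  have f_eq : z₀ * dslope f 0 z₀ = f z₀ := by simpa [hf0] using sub_smul_dslope f 0 z₀
  rcases eq_or_ne (dslope f 0 z₀) 0 with hpz₀ | hpz₀
  · have deriv_ne : deriv f z₀ ≠ 0 := fun h ↦ by
      rw [deriv_eq_dslope_add_smul_deriv_dslope (hp.differentiableAt hnhds), hpz₀, zero_add,
        sub_zero, smul_eq_mul] at h
      rw [h, hpz₀] at nunokawa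
      norm_num [Complex.le_def] at nunokawa
    refine deriv_ne (deriv_eq_zero_of_eventually_le_re_mul_logDeriv (c := -γ)
      ((hf.deriv isOpen_ball).continuousOn.continuousAt hnhds)
      (by rw [← f_eq, hpz₀, mul_zero]) z₀_ne ?_)
    filter_upwards [nhdsWithin_le_nhds hnhds,
      nhdsWithin_le_nhds (isOpen_ne.mem_nhds z₀_ne)] with z hz z_ne
    have hre := abs_arg_le_pi_div_two_iff.1
      ((harg z hz z_ne).trans (Real.arctan_lt_pi_div_two _)).le
    rw [add_re, ofReal_re] at hre
    linarith
  · have hlog : z₀ * logDeriv f z₀ = 1 + z₀ * deriv (dslope f 0) z₀ / dslope f 0 z₀ := by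
      rw [mul_div_assoc, ← logDeriv_apply]
      simpa only [sub_zero] using sub_mul_logDeriv_eq_one_add hf0 (f_eq ▸ mul_ne_zero z₀_ne hpz₀)
        (hf.differentiableAt hnhds)
    obtain ⟨quotient_re, quotient_im⟩ := re_div_eq_zero_and_one_le_abs_im_div p_re hpz₀ nunokawa
    have hre : (z₀ * logDeriv f z₀ + γ).re = 1 + γ := by simp [hlog, quotient_re]
    have him : 1 ≤ |(z₀ * logDeriv f z₀ + γ).im| := by simpa [hlog] using quotient_im
    refine (harg z₀ hz₀ z₀_ne).not_ge ?_
    rw [← hre]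
    exact arctan_one_div_re_le_abs_arg (by linarith) him

theorem stmt_5_general (f : ℂ → ℂ) (γ : ℝ) (hγ : -1 < γ)
    (hf : DifferentiableOn ℂ f (ball 0 1)) (hf0 : f 0 = 0) (hf1 : deriv f 0 = 1)
    (harg : ∀ z ∈ ball (0 : ℂ) 1, z ≠ 0 →
      |Complex.arg (z * deriv f z / f z + (γ : ℂ))| < Real.arctan (1 / (1 + γ))) :
    ∀ z ∈ ball (0 : ℂ) 1, 0 < (if z = 0 then 1 else f z / z).re := by
  intro z hz
  have quotient_eq : (if z = 0 then 1 else f z / z) = dslope f 0 z := by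
    split_ifs with h
    · rw [h, dslope_same, hf1]
    · rw [dslope_of_ne _ h, slope_def_field, hf0, sub_zero, sub_zero]
  rw [quotient_eq]
  refine re_dslope_pos_of_abs_arg_lt hγ hf hf0 hf1 (fun w hw hw0 ↦ ?_) hz
  rw [logDeriv_apply, ← mul_div_assoc]
  exact harg w hw hw0

theorem stmt_5 (f : ℂ → ℂ) (γ : ℝ) (hγ : 0 ≤ γ)
    (hf : DifferentiableOn ℂ f (ball 0 1)) (hf0 : f 0 = 0) (hf1 : deriv f 0 = 1)
    (harg : ∀ z ∈ ball (0 : ℂ) 1,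
      |Complex.arg (z * deriv f z / f z + (γ : ℂ))| < Real.arctan (1 / (1 + γ))) :
    ∀ z ∈ ball (0 : ℂ) 1, 0 < (if z = 0 then 1 else f z / z).re :=
  stmt_5_general f γ (by linarith) hf hf0 hf1 fun z hz _ ↦ harg z hz
end

section
/- Let f be analytic on D with f(0)=0, f'(0)=1, satisfying z f'(z)/f(z) = √3((1+z)/(1−z))^{1/3} + 1 − √3 (principal branch) on D. Then |arg(z f'(z)/f(z) + (√3−1))| < π/6 for all z in D, and consequently Re(f(z)/z) > 0 on D, while f is not starlike (there exist z in D with Re(z f'(z)/f(z)) < 0). -/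
open Complex Metric Real

/-!
The function `q z = f z / z` satisfies `q 0 = 1` and `z q' = (F - 1) q`, where
`F z = c ((1 + z) / (1 - z)) ^ (1 / 3) + 1 - c` and `1 < c ≤ √3`. If `Re q` had a zero, then at
a zero `z₀` of least modulus Jack's lemma for the Cayley transform `(q - 1) / (q + 1)` would give
`z₀ q'(z₀) = -k (1 + b ^ 2) / 2` with `k ≥ 1` and `b = Im q z₀`, hence `Re F z₀ = 1` and
`|Im F z₀| ≥ (1 + b ^ 2) / (2 |b|) ≥ 1`. But `p = ((1 + z₀) / (1 - z₀)) ^ (1 / 3)` then has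
`Re p = 1` and `Re p ^ 3 > 0`, so `3 (Im p) ^ 2 < 1` and `|Im F z₀| = c |Im p| < 1`.
Starlikeness fails because `F z → 1 - c < 0` as `z → -1`.
-/

section

open Filter Set Topology

theorem re_nonneg_and_im_eq_zero_of_re_le_of_hasDerivAt {H : ℂ → ℂ} {H' a : ℂ}
    (hH : HasDerivAt H H' a) (hmax : ∀ s, s.re ≤ a.re → (H s).re ≤ (H a).re) :
    0 ≤ H'.re ∧ H'.im = 0 := by
  have hre_mul_nonpos : ∀ v : ℂ, v.re ≤ 0 → (H' * v).re ≤ 0 := by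
    intro v hv
    have hseg : segment ℝ a (a + v) ⊆ {s | s.re ≤ a.re} :=
      (convex_halfSpace_re_le a.re).segment_subset (by simp) (by simpa using hv)
    have hlocal : IsLocalMaxOn (fun s => (H s).re) {s | s.re ≤ a.re} a :=
      eventually_mem_nhdsWithin.mono hmax
    simpa using hlocal.hasFDerivWithinAt_nonpos
      (reCLM.hasFDerivAt.comp a hH.complexToReal_fderiv).hasFDerivWithinAt
      (mem_posTangentConeAt_of_segment_subset hseg)
  refine ⟨?_, le_antisymm ?_ ?_⟩
  · simpa using hre_mul_nonpos (-1) (by simp)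
  · simpa using hre_mul_nonpos (-I) (by simp)
  · simpa using hre_mul_nonpos I (by simp)

theorem norm_le_div_mul_norm_of_norm_le {E F : Type*} [NormedAddCommGroup E] [NormedSpace ℂ E]
    [NormedAddCommGroup F] [NormedSpace ℂ F] {w : E → F} {r M : ℝ}
    (hw : DifferentiableOn ℂ w (ball 0 r)) (hw0 : w 0 = 0)
    (hM : ∀ z ∈ closedBall 0 r, ‖w z‖ ≤ M) {z : E} (hz : z ∈ closedBall 0 r) :
    ‖w z‖ ≤ M / r * ‖z‖ := by
  rcases (mem_closedBall_zero_iff.1 hz).lt_or_eq with hlt | rfl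
  · have hmaps : MapsTo w (ball 0 r) (closedBall (w 0) M) := fun y hy => by
      simpa [hw0] using hM y (ball_subset_closedBall hy)
    simpa [hw0] using Complex.dist_le_div_mul_dist_of_mapsTo_ball hw hmaps
      (mem_ball_zero_iff.2 hlt)
  · rcases eq_or_ne z 0 with rfl | hne
    · simp [hw0]
    · rw [div_mul_cancel₀ M (norm_ne_zero_iff.2 hne)]
      exact hM z hz

theorem exists_one_le_mul_deriv_eq_mul {w : ℂ → ℂ} {z₀ : ℂ}
    (hw : DifferentiableOn ℂ w (ball 0 ‖z₀‖)) (hwz₀ : DifferentiableAt ℂ w z₀)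
    (hw0 : w 0 = 0) (hne : w z₀ ≠ 0) (hmax : ∀ z ∈ closedBall 0 ‖z₀‖, ‖w z‖ ≤ ‖w z₀‖) :
    ∃ k : ℝ, 1 ≤ k ∧ z₀ * deriv w z₀ = k * w z₀ := by
  have hz₀ : ‖z₀‖ ≠ 0 := norm_ne_zero_iff.2 (by rintro rfl; exact hne hw0)
  -- Jack's lemma: by Schwarz, `H` maps the closed left half-plane into the closed unit disc, and
  -- `H 0 = 1`, so `H' 0` is real and nonnegative; the number `k` is `1 + H' 0`.
  set H : ℂ → ℂ := fun s => w (z₀ * cexp s) / w z₀ * cexp (-s) with hH_def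
  have hH : HasDerivAt H (z₀ * deriv w z₀ / w z₀ - 1) 0 := by
    have harg : HasDerivAt (fun s => z₀ * cexp s) z₀ 0 := by
      simpa using (Complex.hasDerivAt_exp 0).const_mul z₀
    have hcomp : HasDerivAt (fun s => w (z₀ * cexp s)) (deriv w z₀ * z₀) 0 :=
      HasDerivAt.comp (0 : ℂ) (by simpa using hwz₀.hasDerivAt) harg
    refine ((hcomp.div_const (w z₀)).mul (hasDerivAt_neg (0 : ℂ)).cexp).congr_deriv ?_
    simp [hne, mul_comm z₀, sub_eq_add_neg]
  have hH_norm : ∀ s : ℂ, s.re ≤ 0 → ‖H s‖ ≤ 1 := by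
    intro s hs
    have hmem : z₀ * cexp s ∈ closedBall 0 ‖z₀‖ := by
      simpa [norm_exp] using mul_le_of_le_one_right (norm_nonneg z₀) (Real.exp_le_one_iff.2 hs)
    have hschwarz := norm_le_div_mul_norm_of_norm_le hw hw0 hmax hmem
    calc ‖H s‖ = ‖w (z₀ * cexp s)‖ / ‖w z₀‖ * ‖cexp (-s)‖ := by simp [hH_def]
      _ ≤ (‖w z₀‖ / ‖z₀‖ * ‖z₀ * cexp s‖) / ‖w z₀‖ * ‖cexp (-s)‖ := by gcongr
      _ = ‖cexp s * cexp (-s)‖ := by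
        have hw_norm : ‖w z₀‖ ≠ 0 := norm_ne_zero_iff.2 hne
        rw [norm_mul, norm_mul]
        field_simp
      _ = 1 := by rw [← Complex.exp_add]; simp
  have hH0 : H 0 = 1 := by simp [hH_def, hne]
  obtain ⟨hre, him⟩ := re_nonneg_and_im_eq_zero_of_re_le_of_hasDerivAt hH fun s hs =>
    (re_le_norm _).trans (by simpa [hH0] using hH_norm s hs)
  refine ⟨(z₀ * deriv w z₀ / w z₀).re, by simpa using hre, ?_⟩
  have hreal : ((z₀ * deriv w z₀ / w z₀).re : ℂ) = z₀ * deriv w z₀ / w z₀ :=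
    Complex.ext rfl (by simpa using him.symm)
  rw [hreal, div_mul_cancel₀ _ hne]

theorem exists_eq_zero_and_nonneg_closedBall_of_nonpos {E : Type*} [NormedAddCommGroup E]
    [NormedSpace ℝ E] [ProperSpace E] {φ : E → ℝ} {R : ℝ}
    (hφ : ContinuousOn φ (ball 0 R)) (hφ0 : 0 < φ 0)
    {z₁ : E} (hz₁ : z₁ ∈ ball 0 R) (hφz₁ : φ z₁ ≤ 0) :
    ∃ z₀ ∈ ball 0 R, φ z₀ = 0 ∧ ∀ z ∈ closedBall 0 ‖z₀‖, 0 ≤ φ z := by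
  have hsub : closedBall 0 ‖z₁‖ ⊆ ball (0 : E) R :=
    closedBall_subset_ball (mem_ball_zero_iff.1 hz₁)
  have hcompact : IsCompact (closedBall 0 ‖z₁‖ ∩ φ ⁻¹' Iic 0) :=
    (isCompact_closedBall _ _).of_isClosed_subset
      ((hφ.mono hsub).preimage_isClosed_of_isClosed isClosed_closedBall isClosed_Iic)
      inter_subset_left
  obtain ⟨z₀, ⟨hz₀, hφz₀⟩, hmin⟩ :=
    hcompact.exists_isMinOn ⟨z₁, by simp, hφz₁⟩ continuous_norm.continuousOn
  have hpos : ∀ z ∈ ball 0 ‖z₀‖, 0 < φ z := by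
    intro z hz
    by_contra! hφz
    rw [mem_ball_zero_iff] at hz
    rw [mem_closedBall_zero_iff] at hz₀
    exact hz.not_ge (hmin ⟨mem_closedBall_zero_iff.2 (hz.le.trans hz₀), hφz⟩)
  have hne : ‖z₀‖ ≠ 0 := norm_ne_zero_iff.2 (by rintro rfl; exact hφ0.not_ge hφz₀)
  have hnonneg : ∀ z ∈ closedBall 0 ‖z₀‖, 0 ≤ φ z := by
    have hclosure : closure (ball (0 : E) ‖z₀‖) = closedBall 0 ‖z₀‖ := closure_ball 0 hne
    rw [← hclosure]
    refine fun z hz => le_on_closure (fun z hz => (hpos z hz).le) continuousOn_const ?_ hz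
    rw [hclosure]
    exact hφ.mono (closedBall_subset_ball (mem_ball_zero_iff.1 (hsub hz₀)))
  exact ⟨z₀, hsub hz₀, le_antisymm hφz₀ (hnonneg z₀ (by simp)), hnonneg⟩

theorem norm_add_one_sq_sub_norm_sub_one_sq (q : ℂ) : ‖q + 1‖ ^ 2 - ‖q - 1‖ ^ 2 = 4 * q.re := by
  rw [Complex.sq_norm, Complex.sq_norm, normSq_add, normSq_sub]
  simp only [map_one, mul_one]
  ring

theorem add_one_ne_zero_of_re_nonneg_s19 {q : ℂ} (hq : 0 ≤ q.re) : q + 1 ≠ 0 := fun h => by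
  have hre : q.re + 1 = 0 := by simpa using congrArg re h
  linarith

theorem norm_sub_one_div_add_one_le_one {q : ℂ} (hq : 0 ≤ q.re) : ‖(q - 1) / (q + 1)‖ ≤ 1 := by
  rw [norm_div]
  refine div_le_one_of_le₀ (le_of_sq_le_sq ?_ (norm_nonneg _)) (norm_nonneg _)
  linarith [norm_add_one_sq_sub_norm_sub_one_sq q]

theorem norm_sub_one_div_add_one_lt_one {q : ℂ} (hq : 0 < q.re) : ‖(q - 1) / (q + 1)‖ < 1 := by
  rw [norm_div, div_lt_one (norm_pos_iff.2 (add_one_ne_zero_of_re_nonneg_s19 hq.le)),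
    ← sq_lt_sq₀ (norm_nonneg _) (norm_nonneg _)]
  linarith [norm_add_one_sq_sub_norm_sub_one_sq q]

theorem norm_sub_one_div_add_one_eq_one {q : ℂ} (hq : q.re = 0) : ‖(q - 1) / (q + 1)‖ = 1 := by
  rw [norm_div, div_eq_one_iff_eq (norm_ne_zero_iff.2 (add_one_ne_zero_of_re_nonneg_s19 hq.ge)),
    ← sq_eq_sq₀ (norm_nonneg _) (norm_nonneg _)]
  linarith [norm_add_one_sq_sub_norm_sub_one_sq q]

theorem exists_one_le_mul_deriv_eq_of_re_eq_zero {q : ℂ → ℂ} {z₀ : ℂ}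
    (hq : DifferentiableOn ℂ q (ball 0 ‖z₀‖)) (hqz₀ : DifferentiableAt ℂ q z₀) (hq0 : q 0 = 1)
    (hnonneg : ∀ z ∈ closedBall 0 ‖z₀‖, 0 ≤ (q z).re) (hre : (q z₀).re = 0) :
    ∃ k : ℝ, 1 ≤ k ∧ z₀ * deriv q z₀ = (-(k * (1 + (q z₀).im ^ 2) / 2) : ℝ) := by
  have hadd : ∀ z ∈ closedBall 0 ‖z₀‖, q z + 1 ≠ 0 := fun z hz =>
    add_one_ne_zero_of_re_nonneg_s19 (hnonneg z hz)
  have hz₀ : z₀ ∈ closedBall 0 ‖z₀‖ := by simp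
  set w : ℂ → ℂ := fun z => (q z - 1) / (q z + 1) with hw_def
  have hw : DifferentiableOn ℂ w (ball 0 ‖z₀‖) :=
    (hq.sub_const 1).div (hq.add_const 1) fun z hz => hadd z (ball_subset_closedBall hz)
  have hwz₀ : HasDerivAt w (2 * deriv q z₀ / (q z₀ + 1) ^ 2) z₀ := by
    refine ((hqz₀.hasDerivAt.sub_const 1).div (hqz₀.hasDerivAt.add_const 1)
      (hadd z₀ hz₀)).congr_deriv ?_
    ring
  have hnorm : ‖w z₀‖ = 1 := norm_sub_one_div_add_one_eq_one hre
  obtain ⟨k, hk, hjack⟩ := exists_one_le_mul_deriv_eq_mul hw hwz₀.differentiableAt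
    (by simp [hw_def, hq0]) (norm_ne_zero_iff.1 (hnorm ▸ one_ne_zero))
    fun z hz => hnorm ▸ norm_sub_one_div_add_one_le_one (hnonneg z hz)
  have hsq : q z₀ ^ 2 = -(q z₀).im ^ 2 := by
    have hq_eq : q z₀ = (q z₀).im * I := by simpa [hre] using (re_add_im (q z₀)).symm
    linear_combination (q z₀ + (q z₀).im * I) * hq_eq + ((q z₀).im : ℂ) ^ 2 * I_sq
  refine ⟨k, hk, ?_⟩
  have hmul : z₀ * deriv q z₀ = k * (q z₀ ^ 2 - 1) / 2 := by
    have hq1 : q z₀ + 1 ≠ 0 := hadd z₀ hz₀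
    rw [hwz₀.deriv, hw_def] at hjack
    field_simp at hjack
    linear_combination hjack / 2
  rw [hmul, hsq]
  push_cast
  ring

theorem re_pos_of_mul_deriv_eq_mul {q G : ℂ → ℂ} {R : ℝ} (hq : DifferentiableOn ℂ q (ball 0 R))
    (hq0 : q 0 = 1) (hode : ∀ z ∈ ball 0 R, z ≠ 0 → z * deriv q z = G z * q z)
    (hG : ∀ z ∈ ball 0 R, (G z).re = 0 → |(G z).im| < 1) {z : ℂ} (hz : z ∈ ball 0 R) :
    0 < (q z).re := by
  by_contra! hqz
  obtain ⟨z₀, hz₀, hre, hnonneg⟩ := exists_eq_zero_and_nonneg_closedBall_of_nonpos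
    (φ := fun z => (q z).re) (continuous_re.comp_continuousOn hq.continuousOn)
    (by simp [hq0]) hz hqz
  obtain ⟨k, hk, hderiv⟩ := exists_one_le_mul_deriv_eq_of_re_eq_zero
    (hq.mono (ball_subset_ball (mem_ball_zero_iff.1 hz₀).le))
    (hq.differentiableAt (isOpen_ball.mem_nhds hz₀)) hq0 hnonneg hre
  set b := (q z₀).im with hb_def
  have hz₀_ne : z₀ ≠ 0 := by
    rintro rfl
    simp [hq0] at hre
  rw [hode z₀ hz₀ hz₀_ne] at hderiv
  have hre_eq : -((G z₀).im * b) = -(k * (1 + b ^ 2) / 2) := by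
    simpa only [mul_re, hre, mul_zero, zero_sub, ofReal_re, hb_def] using congrArg re hderiv
  have him_eq : (G z₀).re * b = 0 := by
    simpa only [mul_im, hre, mul_zero, add_zero, ofReal_im, hb_def] using congrArg im hderiv
  have hb : b ≠ 0 := by
    intro hb
    rw [hb] at hre_eq
    linarith
  have hG_im := hG z₀ hz₀ ((mul_eq_zero_iff_right hb).1 him_eq)
  have hlt : (1 + b ^ 2) / 2 < |b| := calc
    (1 + b ^ 2) / 2 ≤ k * (1 + b ^ 2) / 2 := by nlinarith [sq_nonneg b]
    _ = (G z₀).im * b := by linarith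
    _ ≤ |(G z₀).im| * |b| := (le_abs_self _).trans_eq (abs_mul _ _)
    _ < |b| := mul_lt_of_lt_one_left (abs_pos.2 hb) hG_im
  nlinarith [sq_nonneg (|b| - 1), sq_abs b]

-- Where `f z = 0`, the hypothesis only says `F z = 0`, so the equality at the zeros of `f` has to
-- come from the identity theorem.
theorem eqOn_mul_of_div_eq {f g F : ℂ → ℂ} {U : Set ℂ} {z₀ : ℂ} (hU : IsOpen U)
    (hU' : IsPreconnected U) (hz₀ : z₀ ∈ U) (hf : DifferentiableOn ℂ f U)
    (hg : DifferentiableOn ℂ g U) (hF : DifferentiableOn ℂ F U) (hf0 : ∃ᶠ z in 𝓝[≠] z₀, f z ≠ 0)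
    (h : ∀ z ∈ U, z ≠ z₀ → g z / f z = F z) : EqOn g (F * f) U := by
  refine (hg.analyticOnNhd hU).eqOn_of_preconnected_of_frequently_eq
    ((hF.mul hf).analyticOnNhd hU) hU' hz₀ ?_
  have hmem : ∀ᶠ z in 𝓝[≠] z₀, z ∈ U ∧ z ≠ z₀ :=
    (eventually_nhdsWithin_of_eventually_nhds (hU.eventually_mem hz₀)).and eventually_mem_nhdsWithin
  exact (hf0.and_eventually hmem).mono fun z ⟨hfz, hzU, hz⟩ => (div_eq_iff hfz).1 (h z hzU hz)

theorem mul_dslope_zero {f : ℂ → ℂ} (hf0 : f 0 = 0) (z : ℂ) : z * dslope f 0 z = f z := by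
  simpa [hf0] using sub_smul_dslope f 0 z

theorem dslope_zero_of_ne {f : ℂ → ℂ} (hf0 : f 0 = 0) {z : ℂ} (hz : z ≠ 0) :
    dslope f 0 z = f z / z := by
  simp [dslope_of_ne f hz, slope_def_field, hf0]

theorem re_dslope_pos_of_mul_deriv_div_eq {f F : ℂ → ℂ} {R : ℝ}
    (hf : DifferentiableOn ℂ f (ball 0 R)) (hf0 : f 0 = 0) (hf1 : deriv f 0 = 1)
    (hF : DifferentiableOn ℂ F (ball 0 R))
    (h : ∀ z ∈ ball 0 R, z ≠ 0 → z * deriv f z / f z = F z)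
    (hF_im : ∀ z ∈ ball 0 R, (F z).re = 1 → |(F z).im| < 1) {z : ℂ} (hz : z ∈ ball 0 R) :
    0 < (dslope f 0 z).re := by
  have hzero : (0 : ℂ) ∈ ball 0 R := mem_ball_self (pos_of_mem_ball hz)
  have hdslope : DifferentiableOn ℂ (dslope f 0) (ball 0 R) :=
    (differentiableOn_dslope (isOpen_ball.mem_nhds hzero)).2 hf
  have hf_ne : ∀ᶠ z in 𝓝[≠] 0, f z ≠ 0 := by
    have hderiv := (hf.differentiableAt (isOpen_ball.mem_nhds hzero)).hasDerivAt
    exact hderiv.eventually_ne (hf1 ▸ one_ne_zero)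
  have hode_f : EqOn (fun z => z * deriv f z) (F * f) (ball 0 R) :=
    eqOn_mul_of_div_eq isOpen_ball (convex_ball 0 R).isPreconnected hzero hf
      (differentiableOn_id.mul (hf.deriv isOpen_ball)) hF hf_ne.frequently h
  have hode : ∀ z ∈ ball 0 R, z ≠ 0 →
      z * deriv (dslope f 0) z = (F z - 1) * dslope f 0 z := by
    intro z hz hz0
    have hderiv : deriv f z = dslope f 0 z + z * deriv (dslope f 0) z := by
      have hmul := (hasDerivAt_id' z).fun_mul
        (hdslope.differentiableAt (isOpen_ball.mem_nhds hz)).hasDerivAt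
      simpa only [mul_dslope_zero hf0, one_mul] using hmul.deriv
    have hf_eq : z * deriv f z = F z * f z := hode_f hz
    rw [hderiv, ← mul_dslope_zero hf0 z] at hf_eq
    exact mul_left_cancel₀ hz0 (by linear_combination hf_eq)
  exact re_pos_of_mul_deriv_eq_mul hdslope (by rw [dslope_same, hf1]) hode
    (fun z hz hre => by simpa using hF_im z hz (by simpa [sub_eq_zero] using hre)) hz

theorem re_one_add_div_one_sub (z : ℂ) :
    ((1 + z) / (1 - z)).re = (1 - ‖z‖ ^ 2) / ‖1 - z‖ ^ 2 := by
  rw [Complex.div_re, ← add_div, Complex.sq_norm, Complex.sq_norm, normSq_apply z]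
  simp only [add_re, one_re, sub_re, add_im, one_im, zero_add, sub_im, zero_sub, mul_neg]
  ring

theorem re_one_add_div_one_sub_pos {z : ℂ} (hz : ‖z‖ < 1) : 0 < ((1 + z) / (1 - z)).re := by
  have hne : 1 - z ≠ 0 := sub_ne_zero.2 fun h => by simp [← h] at hz
  rw [re_one_add_div_one_sub]
  exact div_pos (sub_pos.2 (pow_lt_one₀ (norm_nonneg z) hz two_ne_zero))
    (pow_pos (norm_pos_iff.2 hne) 2)

theorem abs_arg_cpow_lt_of_re_pos {w : ℂ} (hw : 0 < w.re) {a : ℝ} (ha : a ∈ Ioc 0 2) :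
    |arg (w ^ (a : ℂ))| < a * (π / 2) := by
  have hw0 : w ≠ 0 := by rintro rfl; simp at hw
  have harg : |arg w * a| < a * (π / 2) := by
    rw [abs_mul, abs_of_pos ha.1, mul_comm]
    exact mul_lt_mul_of_pos_left (abs_arg_lt_pi_div_two_iff.2 (.inl hw)) ha.1
  have hpi : a * (π / 2) ≤ π := by nlinarith [ha.2, Real.pi_pos]
  have hmem := abs_lt.1 (harg.trans_le hpi)
  rw [cpow_ofReal, ofReal_cos, ofReal_sin, arg_mul_cos_add_sin_mul_I
    (Real.rpow_pos_of_pos (norm_pos_iff.2 hw0) a) ⟨hmem.1, hmem.2.le⟩]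
  exact harg

theorem three_mul_im_sq_lt_re_sq_of_re_pow_three_pos {p : ℂ} (hp : 0 < p.re)
    (hp3 : 0 < (p ^ 3).re) : 3 * p.im ^ 2 < p.re ^ 2 := by
  have hre : (p ^ 3).re = p.re * (p.re ^ 2 - 3 * p.im ^ 2) := by
    simp only [pow_succ, pow_zero, one_mul, mul_re, mul_im]
    ring
  rw [hre] at hp3
  exact sub_pos.1 (pos_of_mul_pos_right hp3 hp.le)

theorem differentiableOn_one_add_div_one_sub_cpow (a : ℂ) :
    DifferentiableOn ℂ (fun z : ℂ => ((1 + z) / (1 - z)) ^ a) (ball 0 1) := by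
  have hne : ∀ z ∈ ball (0 : ℂ) 1, 1 - z ≠ 0 := fun z hz =>
    sub_ne_zero.2 fun h => by simp [← h] at hz
  refine DifferentiableOn.cpow_const ?_ fun z hz =>
      .inl (re_one_add_div_one_sub_pos (mem_ball_zero_iff.1 hz))
  exact (differentiableOn_id.const_add 1).div (differentiableOn_id.const_sub 1) hne

theorem abs_im_lt_one_of_re_eq_one_of_re_pow_three_pos {c : ℝ} {p : ℂ} (hc : c ∈ Ioc 0 √3)
    (hp3 : 0 < (p ^ 3).re) (hre : (c * p + 1 - c).re = 1) : |(c * p + 1 - c).im| < 1 := by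
  have hp_re : p.re = 1 := by
    have hre' : c * p.re + 1 - c = 1 := by simpa using hre
    exact mul_left_cancel₀ hc.1.ne' (by linarith)
  have him : (c * p + 1 - c).im = c * p.im := by simp
  have hp_im : 3 * p.im ^ 2 < 1 := by
    simpa [hp_re] using three_mul_im_sq_lt_re_sq_of_re_pow_three_pos (hp_re ▸ one_pos) hp3
  have hc3 : c ^ 2 ≤ 3 := (Real.le_sqrt hc.1.le zero_le_three).1 hc.2
  rw [him, ← sq_lt_one_iff_abs_lt_one, mul_pow]
  exact (mul_le_mul_of_nonneg_right hc3 (sq_nonneg _)).trans_lt hp_im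

theorem exists_one_add_div_one_sub_eq {w : ℂ} (hw : 0 < w.re) :
    ∃ z ∈ ball (0 : ℂ) 1, (1 + z) / (1 - z) = w := by
  refine ⟨(w - 1) / (w + 1), mem_ball_zero_iff.2 (norm_sub_one_div_add_one_lt_one hw), ?_⟩
  have hw1 : w + 1 ≠ 0 := add_one_ne_zero_of_re_nonneg_s19 hw.le
  have hadd : 1 + (w - 1) / (w + 1) = 2 * w / (w + 1) := by field_simp; ring
  have hsub : 1 - (w - 1) / (w + 1) = 2 / (w + 1) := by field_simp; ring
  rw [hadd, hsub, div_div_div_cancel_right₀ hw1, mul_div_cancel_left₀ w two_ne_zero]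

theorem exists_one_add_div_one_sub_cpow_eq {a t : ℝ} (ha : a ≠ 0) (ht : 0 < t) :
    ∃ z ∈ ball (0 : ℂ) 1, ((1 + z) / (1 - z)) ^ (a : ℂ) = t := by
  obtain ⟨z, hz, hzt⟩ := exists_one_add_div_one_sub_eq (w := (t ^ a⁻¹ : ℝ))
    (by simpa using Real.rpow_pos_of_pos ht a⁻¹)
  refine ⟨z, hz, ?_⟩
  rw [hzt, ← ofReal_cpow (Real.rpow_nonneg ht.le _), Real.rpow_inv_rpow ht.le ha]

theorem exists_ne_zero_re_mul_cpow_add_one_sub_neg {a c : ℝ} (ha : a ≠ 0) (hc : 1 < c) :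
    ∃ z ∈ ball (0 : ℂ) 1, z ≠ 0 ∧ (c * ((1 + z) / (1 - z)) ^ (a : ℂ) + 1 - c).re < 0 := by
  set t : ℝ := (c - 1) / (2 * c) with ht
  have hct : c * t + 1 - c = (1 - c) / 2 := by rw [ht]; field_simp; ring
  obtain ⟨z, hz, hzt⟩ := exists_one_add_div_one_sub_cpow_eq ha
    (show 0 < t from div_pos (sub_pos.2 hc) (by positivity))
  refine ⟨z, hz, ?_, ?_⟩
  · rintro rfl
    have ht1 : t = 1 := by simpa using hzt.symm
    rw [ht1] at hct
    linarith
  · rw [hzt]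
    norm_cast
    linarith

end

theorem stmt_19_general (f : ℂ → ℂ) {c : ℝ} (hc : c ∈ Set.Ioc 1 √3)
    (hf : DifferentiableOn ℂ f (ball 0 1)) (hf0 : f 0 = 0) (hf1 : deriv f 0 = 1)
    (heq : ∀ z ∈ ball (0 : ℂ) 1, z ≠ 0 →
      z * deriv f z / f z = c * ((1 + z) / (1 - z)) ^ ((1 : ℂ) / 3) + 1 - c) :
    (∀ z ∈ ball (0 : ℂ) 1, z ≠ 0 → |arg (z * deriv f z / f z + (c - 1))| < π / 6) ∧
    (∀ z ∈ ball (0 : ℂ) 1, 0 < (if z = 0 then 1 else f z / z).re) ∧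
    (∃ z ∈ ball (0 : ℂ) 1, (z * deriv f z / f z).re < 0) := by
  have hc0 : 0 < c := one_pos.trans hc.1
  have hthird : ((1 / 3 : ℝ) : ℂ) = 1 / 3 := by norm_num
  have hw_pos : ∀ z ∈ ball (0 : ℂ) 1, 0 < ((1 + z) / (1 - z)).re := fun z hz =>
    re_one_add_div_one_sub_pos (mem_ball_zero_iff.1 hz)
  refine ⟨fun z hz hz0 => ?_, fun z hz => ?_, ?_⟩
  · have harg := abs_arg_cpow_lt_of_re_pos (hw_pos z hz) (a := 1 / 3) (by norm_num)
    rw [hthird] at harg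
    rw [heq z hz hz0, add_sub_assoc, add_assoc, sub_add_sub_cancel, sub_self, add_zero,
      arg_real_mul _ hc0]
    linarith
  · have hpos := re_dslope_pos_of_mul_deriv_div_eq hf hf0 hf1
      ((((differentiableOn_one_add_div_one_sub_cpow _).const_mul _).add_const 1).sub_const _) heq
      (fun z hz => abs_im_lt_one_of_re_eq_one_of_re_pow_three_pos ⟨hc0, hc.2⟩
        (by simpa using hw_pos z hz)) hz
    split_ifs with hz0
    · exact one_pos
    · rwa [dslope_zero_of_ne hf0 hz0] at hpos
  · obtain ⟨z, hz, hz0, hneg⟩ :=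
      exists_ne_zero_re_mul_cpow_add_one_sub_neg (a := 1 / 3) (by norm_num) hc.1
    rw [hthird] at hneg
    exact ⟨z, hz, by rwa [heq z hz hz0]⟩

theorem stmt_19 (f : ℂ → ℂ)
    (hf : DifferentiableOn ℂ f (ball 0 1)) (hf0 : f 0 = 0) (hf1 : deriv f 0 = 1)
    (heq : ∀ z ∈ ball (0 : ℂ) 1, z ≠ 0 →
      z * deriv f z / f z =
        (Real.sqrt 3 : ℂ) * (((1 + z) / (1 - z)) ^ ((1 : ℂ) / 3)) + 1 - (Real.sqrt 3 : ℂ)) :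
    (∀ z ∈ ball (0 : ℂ) 1, z ≠ 0 →
      |Complex.arg (z * deriv f z / f z + ((Real.sqrt 3 : ℂ) - 1))| < Real.pi / 6) ∧
    (∀ z ∈ ball (0 : ℂ) 1, 0 < (if z = 0 then 1 else f z / z).re) ∧
    (∃ z ∈ ball (0 : ℂ) 1, (z * deriv f z / f z).re < 0) :=
  stmt_19_general f ⟨by rw [Real.lt_sqrt] <;> norm_num, le_rfl⟩ hf hf0 hf1 heq
end
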